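/- For n = 5909, the least index i with |a(5909,i)| = M_5909 is L(5909) = (5909·5910 - 2·3735)/4 = 8728680. -/

import Mathlib

open Polynomial

/-- `a n i` is the coefficient of `q^i` in `(q;q)_n = ∏_{k=1}^n (1 - q^k)` over `ℤ`. -/
noncomputable def a (n i : ℕ) : ℤ :=
  (∏ k ∈ Finset.Icc 1 n, (1 - (X : Polynomial ℤ) ^ k)).coeff i

/-- `M n` is the maximum of `|a n i|` over `0 ≤ i ≤ n(n+1)/2`. -/
noncomputable def M (n : ℕ) : ℕ :=
  (Finset.range (n * (n + 1) / 2 + 1)).sup fun i => (a n i).natAbs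

/-- `L n` is the least index `i` with `|a n i| = M n`. -/
noncomputable def L (n : ℕ) : ℕ :=
  sInf {i : ℕ | (a n i).natAbs = M n}

namespace Pf
open Real

/-- The real product `∏ 2 sin(kθ/2)`. -/
noncomputable def P (n : ℕ) (θ : ℝ) : ℝ := ∏ k ∈ Finset.Icc 1 n, (2 * sin (k * θ / 2))

lemma one_sub_cexp (x : ℝ) :
    1 - Complex.exp (x * Complex.I) =
      (-Complex.I) * ((2 * sin (x / 2) : ℝ) : ℂ) * Complex.exp (((x / 2 : ℝ) : ℂ) * Complex.I) := by
  have h1 : Complex.exp (x * Complex.I) =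
      Complex.exp (((x / 2 : ℝ) : ℂ) * Complex.I) * Complex.exp (((x / 2 : ℝ) : ℂ) * Complex.I) := by
    rw [← Complex.exp_add]; congr 1; push_cast; ring
  rw [h1, Complex.exp_mul_I, ← Complex.ofReal_cos, ← Complex.ofReal_sin]
  have h2 : ((cos (x / 2) : ℝ) : ℂ) ^ 2 = 1 - ((sin (x / 2) : ℝ) : ℂ) ^ 2 := by
    have := Real.cos_sq' (x / 2)
    exact_mod_cast this
  have h3 := Complex.I_sq
  push_cast at *
  linear_combination (-1) * h2 + (Complex.sin (x/2))^2 * h3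

lemma prod_eval (n : ℕ) (θ : ℝ) :
    ∏ k ∈ Finset.Icc 1 n, (1 - Complex.exp (θ * Complex.I) ^ k) =
      (-Complex.I) ^ n * ((P n θ : ℝ) : ℂ) *
        Complex.exp (((((n * (n + 1) : ℝ) / 4) * θ : ℝ) : ℂ) * Complex.I) := by
  induction n with
  | zero => simp [P]
  | succ n ih =>
    rw [Finset.prod_Icc_succ_top (by omega), ih]
    have h : P (n + 1) θ = P n θ * (2 * sin ((n + 1 : ℕ) * θ / 2)) := by
      unfold P; rw [Finset.prod_Icc_succ_top (by omega)]
    have h1 : Complex.exp (θ * Complex.I) ^ (n + 1) =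
        Complex.exp (((((n + 1 : ℕ) : ℝ) * θ : ℝ) : ℂ) * Complex.I) := by
      rw [← Complex.exp_nat_mul]; congr 1; push_cast; ring
    rw [h1, one_sub_cexp, h]
    have h2 : Complex.exp ((((((n + 1 : ℕ) : ℝ) * (((n + 1 : ℕ) : ℝ) + 1) / 4) * θ : ℝ) : ℂ) * Complex.I)
        = Complex.exp ((((n * (n + 1) : ℝ) / 4 * θ : ℝ) : ℂ) * Complex.I) *
          Complex.exp ((((((n + 1 : ℕ) : ℝ) * θ) / 2 : ℝ) : ℂ) * Complex.I) := by
      rw [← Complex.exp_add]; congr 1; push_cast; ring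
    rw [h2]
    push_cast
    ring

lemma sum_cos_eq (n i : ℕ) (hn : n % 4 = 1) (θ : ℝ) :
    ∑ j ∈ (∏ k ∈ Finset.Icc 1 n, (1 - (X : Polynomial ℤ) ^ k)).support,
      (a n j : ℝ) * cos (((j : ℝ) - i) * θ) =
    P n θ * sin (((n * (n + 1) : ℝ) / 4 - i) * θ) := by
  have hev := prod_eval n θ
  set p := (∏ k ∈ Finset.Icc 1 n, (1 - (X : Polynomial ℤ) ^ k)) with hp
  have h1 : ∏ k ∈ Finset.Icc 1 n, (1 - Complex.exp (θ * Complex.I) ^ k) =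
      p.eval₂ (Int.castRingHom ℂ) (Complex.exp (θ * Complex.I)) := by
    rw [hp, Polynomial.eval₂_finsetProd]
    apply Finset.prod_congr rfl
    intro k _
    simp
  rw [h1, Polynomial.eval₂_eq_sum, Polynomial.sum] at hev
  have hI : (-Complex.I) ^ n = -Complex.I := by
    have : n = 4 * (n / 4) + 1 := by omega
    rw [this, pow_succ, pow_mul]
    have : (-Complex.I) ^ 4 = 1 := by rw [neg_pow]; norm_num [Complex.I_pow_four]
    rw [this]; simp
  rw [hI] at hev
  have hm := congrArg (fun z => (z * Complex.exp (((-(i : ℝ) * θ : ℝ) : ℂ) * Complex.I)).re) hev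
  rw [Finset.sum_mul, Complex.re_sum] at hm
  convert hm using 1
  · apply Finset.sum_congr rfl
    intro j _
    have : (Int.castRingHom ℂ) (p.coeff j) * Complex.exp (θ * Complex.I) ^ j *
        Complex.exp (((-(i : ℝ) * θ : ℝ) : ℂ) * Complex.I) =
        (((a n j : ℤ) : ℝ) : ℂ) * Complex.exp (((((j : ℝ) - i) * θ : ℝ) : ℂ) * Complex.I) := by
      rw [← Complex.exp_nat_mul, mul_assoc, ← Complex.exp_add]
      simp only [a, ← hp]
      simp
      left
      congr 1; ring
    rw [this, Complex.re_ofReal_mul, Complex.exp_ofReal_mul_I_re]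
  · rw [mul_assoc, ← Complex.exp_add, ← add_mul, ← Complex.ofReal_add]
    rw [mul_assoc, neg_mul, Complex.neg_re, Complex.I_mul_re, neg_neg, Complex.im_ofReal_mul,
      Complex.exp_ofReal_mul_I_im]
    congr 2; ring

lemma integral_cos_int (k : ℤ) (hk : k ≠ 0) : ∫ θ in (0:ℝ)..π, cos ((k : ℝ) * θ) = 0 := by
  have hk' : (k : ℝ) ≠ 0 := by exact_mod_cast hk
  rw [intervalIntegral.integral_comp_mul_left (fun x => cos x) hk']
  simp [Real.sin_int_mul_pi]

lemma coeff_integral (n i : ℕ) (hn : n % 4 = 1) :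
    π * (a n i : ℝ) = ∫ θ in (0:ℝ)..π, P n θ * sin (((n * (n + 1) : ℝ) / 4 - i) * θ) := by
  have : ∀ θ, P n θ * sin (((n * (n + 1) : ℝ) / 4 - i) * θ) = _ :=
    fun θ => (sum_cos_eq n i hn θ).symm
  simp_rw [this]
  rw [intervalIntegral.integral_finsetSum
    (fun j _ => Continuous.intervalIntegrable (by fun_prop) _ _)]
  have h2 : ∀ j : ℕ, ∫ θ in (0:ℝ)..π, (a n j : ℝ) * cos (((j : ℝ) - i) * θ) =
      if j = i then π * (a n i : ℝ) else 0 := by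
    intro j
    rw [intervalIntegral.integral_const_mul]
    split_ifs with h
    · subst h; simp [mul_comm]
    · have := integral_cos_int ((j : ℤ) - i) (by omega)
      push_cast at this
      rw [this, mul_zero]
  simp_rw [h2]
  rw [Finset.sum_ite_eq']
  split_ifs with h
  · rfl
  · have : a n i = 0 := by unfold a; simpa using h
    simp [this]

lemma continuous_P (n : ℕ) : Continuous (P n) := by
  unfold P; fun_prop

end Pf

namespace Pf
open Real

lemma hasSum_log (r : ℝ) (h0 : 0 ≤ r) (h1 : r < 1) (y : ℝ) :
    HasSum (fun m : ℕ => r ^ m * cos (m * y) / m) (-(log (1 + r ^ 2 - 2 * r * cos y) / 2)) := by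
  have hn : ‖(r : ℂ) * Complex.exp (y * Complex.I)‖ < 1 := by
    rw [norm_mul, Complex.norm_exp_ofReal_mul_I, mul_one, Complex.norm_real, norm_of_nonneg h0]
    exact h1
  have h := Complex.hasSum_re (Complex.hasSum_taylorSeries_neg_log hn)
  convert h using 1
  · funext m
    rw [mul_pow, ← Complex.exp_nat_mul]
    have : (m : ℂ) * (y * Complex.I) = (((m : ℝ) * y : ℝ) : ℂ) * Complex.I := by push_cast; ring
    rw [this, ← Complex.ofReal_pow]
    rw [← Complex.ofReal_natCast, Complex.div_ofReal_re, Complex.re_ofReal_mul,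
      Complex.exp_ofReal_mul_I_re]
  · rw [Complex.neg_re, Complex.log_re]
    congr 1
    have hsq : 1 + r ^ 2 - 2 * r * cos y = ‖1 - (r : ℂ) * Complex.exp (y * Complex.I)‖ ^ 2 := by
      rw [← Complex.normSq_eq_norm_sq, Complex.normSq_apply]
      simp only [Complex.sub_re, Complex.one_re, Complex.sub_im, Complex.one_im,
        Complex.re_ofReal_mul, Complex.im_ofReal_mul, Complex.exp_ofReal_mul_I_re,
        Complex.exp_ofReal_mul_I_im]
      linear_combination (-r ^ 2) * (Real.sin_sq_add_cos_sq y)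
    rw [hsq, Real.log_pow]; push_cast; ring

/-- The sine series whose derivative is `-log|1-ρ e^{iw}|`. -/
noncomputable def F (ρ w : ℝ) : ℝ := ∑' m : ℕ, ρ ^ m * sin (m * w) / (m : ℝ) ^ 2

lemma summable_pow_div (r : ℝ) (h0 : 0 ≤ r) (h1 : r < 1) :
    Summable (fun m : ℕ => r ^ m / m) := by
  refine Summable.of_nonneg_of_le (fun m => by positivity) (fun m => ?_)
    (summable_geometric_of_lt_one h0 h1)
  rcases Nat.eq_zero_or_pos m with h | h
  · subst h; simp
  · exact div_le_self (by positivity) (by exact_mod_cast h)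

lemma F_term_bound (r : ℝ) (h0 : 0 ≤ r) (w : ℝ) (m : ℕ) :
    ‖r ^ m * sin (m * w) / (m : ℝ) ^ 2‖ ≤ r ^ m / (m : ℝ) ^ 2 := by
  rw [norm_div, norm_mul, norm_pow, norm_pow, Real.norm_natCast, norm_of_nonneg h0]
  gcongr
  have := abs_sin_le_one (m * w)
  rw [Real.norm_eq_abs]
  nlinarith [pow_nonneg h0 m]

lemma summable_pow_div_sq (r : ℝ) (h0 : 0 ≤ r) (h1 : r < 1) :
    Summable (fun m : ℕ => r ^ m / (m : ℝ) ^ 2) := by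
  refine Summable.of_nonneg_of_le (fun m => by positivity) (fun m => ?_)
    (summable_geometric_of_lt_one h0 h1)
  rcases Nat.eq_zero_or_pos m with h | h
  · subst h; simp
  · exact div_le_self (by positivity) (one_le_pow₀ (by exact_mod_cast h))

lemma F_summable (r : ℝ) (h0 : 0 ≤ r) (h1 : r < 1) (w : ℝ) :
    Summable (fun m : ℕ => r ^ m * sin (m * w) / (m : ℝ) ^ 2) :=
  Summable.of_norm_bounded (summable_pow_div_sq r h0 h1) (F_term_bound r h0 w)

lemma F_hasDerivAt (r : ℝ) (h0 : 0 ≤ r) (h1 : r < 1) (w : ℝ) :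
    HasDerivAt (F r) (-(log (1 + r ^ 2 - 2 * r * cos w) / 2)) w := by
  rw [← (hasSum_log r h0 h1 w).tsum_eq]
  unfold F
  refine hasDerivAt_tsum (summable_geometric_of_lt_one h0 h1)
    (g := fun (m : ℕ) w => r ^ m * sin (m * w) / (m : ℝ) ^ 2)
    (g' := fun (m : ℕ) w => r ^ m * cos (m * w) / (m : ℝ)) ?_ ?_ (y₀ := 0) ?_ w
  · intro m y
    rcases Nat.eq_zero_or_pos m with h | h
    · subst h; simpa using hasDerivAt_const y (0 : ℝ)
    · have hm : (m : ℝ) ≠ 0 := by positivity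
      have := (((hasDerivAt_id y).const_mul (m : ℝ)).sin.const_mul (r ^ m)).div_const ((m : ℝ) ^ 2)
      refine HasDerivAt.congr_deriv this ?_
      simp only [id]
      field_simp
  · intro m y
    rcases Nat.eq_zero_or_pos m with h | h
    · subst h; simp
    · rw [norm_div, norm_mul, norm_pow, Real.norm_natCast, norm_of_nonneg h0]
      have : ‖cos (m * y)‖ ≤ 1 := abs_cos_le_one _
      have h2 : (1 : ℝ) ≤ m := by exact_mod_cast h
      rw [div_le_iff₀ (by positivity)]
      have := pow_nonneg h0 m
      nlinarith
  · exact F_summable r h0 h1 0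

lemma F_abs_le (r : ℝ) (h0 : 0 ≤ r) (h1 : r < 1) (w : ℝ) :
    |F r w| ≤ ∑' m : ℕ, r ^ m / (m : ℝ) ^ 2 :=
  tsum_of_norm_bounded (summable_pow_div_sq r h0 h1).hasSum (F_term_bound r h0 w)

lemma F_zero (r : ℝ) : F r 0 = 0 := by simp [F]

lemma F_pi (r : ℝ) : F r π = 0 := by simp [F, Real.sin_nat_mul_pi]

lemma F_periodic (r w : ℝ) : F r (w + 2 * π) = F r w := by
  unfold F
  congr 1; funext m
  rw [mul_add, show (m : ℝ) * (2 * π) = m * (2 * π) from rfl, Real.sin_add_nat_mul_two_pi]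

lemma F_arg_pos (r : ℝ) (h0 : 0 ≤ r) (h1 : r < 1) (w : ℝ) : 0 < 1 + r ^ 2 - 2 * r * cos w := by
  nlinarith [cos_le_one w]

lemma F_nonneg (r : ℝ) (h0 : 0 ≤ r) (h1 : r < 1) (w : ℝ) (hw : 0 ≤ w) (hw2 : w ≤ π) :
    0 ≤ F r w := by
  have hd := F_hasDerivAt r h0 h1
  have hc : ConcaveOn ℝ (Set.Icc 0 π) (F r) := by
    apply AntitoneOn.concaveOn_of_deriv (convex_Icc 0 π)
    · exact fun x _ => (hd x).continuousAt.continuousWithinAt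
    · exact fun x _ => (hd x).differentiableAt.differentiableWithinAt
    · intro x hx y hy hxy
      rw [interior_Icc] at hx hy
      rw [(hd x).deriv, (hd y).deriv]
      have : cos y ≤ cos x := cos_le_cos_of_nonneg_of_le_pi hx.1.le hy.2.le hxy
      have := Real.log_le_log (F_arg_pos r h0 h1 x)
        (show 1 + r ^ 2 - 2 * r * cos x ≤ 1 + r ^ 2 - 2 * r * cos y by nlinarith)
      linarith
  have := hc.2 (Set.left_mem_Icc.2 pi_pos.le) (Set.right_mem_Icc.2 pi_pos.le)
    (show 0 ≤ 1 - w / π by rw [sub_nonneg, div_le_one pi_pos]; exact hw2)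
    (show 0 ≤ w / π by positivity) (by ring)
  simp only [F_zero, F_pi, smul_eq_mul, mul_zero, add_zero, zero_add] at this
  rwa [div_mul_cancel₀ _ pi_ne_zero] at this

lemma F_ge (r : ℝ) (h0 : 0 ≤ r) (h1 : r < 1) (w : ℝ) (hw : π ≤ w) :
    -(log (1 + r) * (w - π)) ≤ F r w := by
  have hd := F_hasDerivAt r h0 h1
  have := (convex_univ (𝕜 := ℝ) (E := ℝ)).mul_sub_le_image_sub_of_le_deriv (f := F r)
    (fun x _ => (hd x).continuousAt.continuousWithinAt)
    (fun x _ => (hd x).differentiableAt.differentiableWithinAt)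
    (C := -log (1 + r)) (fun x _ => by
      rw [(hd x).deriv]
      have := Real.log_le_log (F_arg_pos r h0 h1 x)
        (show 1 + r ^ 2 - 2 * r * cos x ≤ (1 + r) ^ 2 by nlinarith [neg_one_le_cos x])
      rw [Real.log_pow] at this
      push_cast at this
      linarith) π trivial w trivial hw
  rw [F_pi] at this
  linarith

lemma dilog_nine : ∑' m : ℕ, (9 / 10 : ℝ) ^ m / (m : ℝ) ^ 2 ≤ 131 / 100 := by
  have hs := summable_pow_div_sq (9 / 10) (by norm_num) (by norm_num)
  rw [← hs.sum_add_tsum_nat_add 20]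
  have h2 : ∑' m : ℕ, (9 / 10 : ℝ) ^ (m + 20) / ((m + 20 : ℕ) : ℝ) ^ 2 ≤
      (9 / 10) ^ 20 / 400 * 10 := by
    have hg := (hasSum_geometric_of_lt_one (r := (9 / 10 : ℝ)) (by norm_num) (by norm_num)).mul_left
      ((9 / 10 : ℝ) ^ 20 / 400)
    refine (Summable.tsum_le_tsum (fun m => ?_) ((summable_nat_add_iff 20).2 hs) hg.summable).trans ?_
    · rw [pow_add]
      have : (400 : ℝ) ≤ ((m + 20 : ℕ) : ℝ) ^ 2 := by push_cast; nlinarith [Nat.cast_nonneg (α := ℝ) m]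
      rw [div_le_iff₀ (by positivity)]
      have : 0 ≤ (9 / 10 : ℝ) ^ 20 * (9 / 10) ^ m := by positivity
      calc (9 / 10 : ℝ) ^ m * (9 / 10) ^ 20 = (9 / 10 : ℝ) ^ 20 / 400 * (9 / 10) ^ m * 400 := by ring
        _ ≤ _ := by gcongr
    · rw [hg.tsum_eq]; norm_num
  have h1 : ∑ m ∈ Finset.range 20, (9 / 10 : ℝ) ^ m / (m : ℝ) ^ 2 ≤ 1.302 := by
    norm_num [Finset.sum_range_succ]
  norm_num at h1 h2 ⊢
  linarith

lemma dilog_le (r : ℝ) (h0 : 0 ≤ r) (h1 : r ≤ 9 / 10) :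
    ∑' m : ℕ, r ^ m / (m : ℝ) ^ 2 ≤ r * (131 / 90) := by
  have hs := summable_pow_div_sq (9 / 10) (by norm_num) (by norm_num)
  have h : ∑' m : ℕ, r ^ m / (m : ℝ) ^ 2 ≤
      ∑' m : ℕ, r / (9 / 10) * ((9 / 10 : ℝ) ^ m / (m : ℝ) ^ 2) := by
    refine Summable.tsum_le_tsum (fun m => ?_) (summable_pow_div_sq r h0 (by linarith))
      (hs.mul_left _)
    rcases m with _ | m
    · simp
    · rw [← mul_div_assoc]
      gcongr
      rw [pow_succ, pow_succ]
      have : r ^ m ≤ (9 / 10) ^ m := by gcongr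
      nlinarith
  rw [tsum_mul_left] at h
  refine h.trans ?_
  have := mul_le_mul_of_nonneg_left dilog_nine (show 0 ≤ r / (9 / 10) by positivity)
  linarith

lemma log_one_add_nine : log (1 + 9 / 10) ≤ 0.6432 := by
  have h : (1 + 9 / 10 : ℝ) = 2 * 0.95 := by norm_num
  rw [h, Real.log_mul (by norm_num) (by norm_num)]
  have := Real.log_le_sub_one_of_pos (show (0 : ℝ) < 0.95 by norm_num)
  have := Real.log_two_lt_d9
  linarith

lemma log_one_add_81 : log (1 + 81 / 100) ≤ 0.5982 := by
  have h : (1 + 81 / 100 : ℝ) = 2 * 0.905 := by norm_num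
  rw [h, Real.log_mul (by norm_num) (by norm_num)]
  have := Real.log_le_sub_one_of_pos (show (0 : ℝ) < 0.905 by norm_num)
  have := Real.log_two_lt_d9
  linarith

/-- case `q = 1` -/
lemma F_bound_one (w : ℝ) (hw : 2 * π ≤ w) : -F (9 / 10) w ≤ 0.116 * w := by
  have h3 := pi_gt_d2
  have e : F (9 / 10) w = F (9 / 10) (w - 2 * π) := by
    rw [← F_periodic (9 / 10) (w - 2 * π)]; congr 1; ring
  rcases le_total (w - 2 * π) π with h | h
  · have := F_nonneg (9 / 10) (by norm_num) (by norm_num) _ (by linarith) h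
    nlinarith
  · have h1 := F_ge (9 / 10) (by norm_num) (by norm_num) _ h
    have h2 := F_abs_le (9 / 10) (by norm_num) (by norm_num) w
    have h4 := dilog_nine
    have h5 := (abs_le.1 h2).1
    have h6 := mul_le_mul_of_nonneg_right log_one_add_nine (sub_nonneg.2 h)
    rw [← e] at h1
    nlinarith

lemma F_bound_two (r : ℝ) (h0 : 0 ≤ r) (hr : r ≤ 81 / 100) (w : ℝ) (hw : 0 ≤ w) :
    -F r w ≤ 0.232 * w := by
  have h3 := pi_gt_d2
  rcases le_total w π with h | h
  · have := F_nonneg r h0 (by linarith) _ hw h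
    nlinarith
  · have h1 := F_ge r h0 (by linarith) _ h
    have h2 := F_abs_le r h0 (by linarith) w
    have h4 := dilog_le r h0 (by linarith)
    have h5 := (abs_le.1 h2).1
    have h7 : log (1 + r) ≤ log (1 + 81 / 100) := Real.log_le_log (by linarith) (by linarith)
    have h6 := mul_le_mul_of_nonneg_right (h7.trans log_one_add_81) (sub_nonneg.2 h)
    nlinarith

end Pf

namespace Pf
open Real

/-- cosine sums -/
noncomputable def S (n : ℕ) (y : ℝ) : ℝ := ∑ k ∈ Finset.Icc 1 n, cos (k * y)

lemma S_formula (n : ℕ) (y : ℝ) :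
    2 * sin (y / 2) * S n y = sin ((n + 1 / 2) * y) - sin (y / 2) := by
  induction n with
  | zero => simp [S, show (2⁻¹ : ℝ) * y = y / 2 by ring]
  | succ n ih =>
    have : S (n + 1) y = S n y + cos ((n + 1 : ℕ) * y) := by
      unfold S; rw [Finset.sum_Icc_succ_top (by omega)]
    rw [this, mul_add, ih]
    have e1 : ((n + 1 : ℕ) + 1 / 2 : ℝ) * y = (n + 1) * y + y / 2 := by push_cast; ring
    have e2 : ((n : ℝ) + 1 / 2) * y = (n + 1) * y - y / 2 := by ring
    rw [e1, e2, sin_add, sin_sub]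
    push_cast
    ring

lemma S_abs_le (n : ℕ) (y : ℝ) : |S n y| ≤ n := by
  unfold S
  refine (Finset.abs_sum_le_sum_abs _ _).trans ?_
  refine (Finset.sum_le_sum (fun k _ => abs_cos_le_one _)).trans ?_
  simp

lemma S_abs_le_of_sin (n : ℕ) (y d : ℝ) (hd : 0 < d) (h : d ≤ |sin (y / 2)|) :
    |S n y| ≤ 1 / (2 * d) + 1 / 2 := by
  have h1 := S_formula n y
  have hs : 0 < |sin (y / 2)| := by linarith
  have h2 : 2 * |sin (y / 2)| * |S n y| ≤ 1 + |sin (y / 2)| := by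
    rw [show 2 * |sin (y / 2)| * |S n y| = |2 * sin (y / 2) * S n y| by
      rw [abs_mul, abs_mul]; simp, h1]
    exact (abs_sub _ _).trans (by linarith [abs_sin_le_one ((n + 1 / 2) * y)])
  have h3 : |S n y| ≤ 1 / (2 * |sin (y / 2)|) + 1 / 2 := by
    rw [show 1 / (2 * |sin (y / 2)|) + 1 / 2 = (1 + |sin (y / 2)|) / (2 * |sin (y / 2)|) by
      field_simp, le_div_iff₀ (by positivity)]
    linarith
  refine h3.trans ?_
  gcongr

lemma S_near (n : ℕ) (y : ℝ) (h0 : 0 < y) (h1 : y ≤ 13 / 10) :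
    -S n y ≤ -(sin ((n + 1 / 2) * y) / y) + 1 := by
  have h2 := S_formula n y
  have hz1 := sin_gt_sub_cube (x := y / 2) (by linarith)
  have hz2 := sin_lt (x := y / 2) (by linarith)
  set s := sin (y / 2)
  set W := sin ((n + 1 / 2) * y)
  have hs : 0 < s := by nlinarith [sq_nonneg y]
  have hW : |W| ≤ 1 := abs_sin_le_one _
  have e : S n y = (W - s) / (2 * s) := by rw [eq_div_iff (by positivity)]; linarith
  have e2 : -S n y = -(W / y) + 1 / 2 - W * (1 / (2 * s) - 1 / y) := by
    rw [e]; field_simp; ring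
  have h3 : 0 ≤ 1 / (2 * s) - 1 / y := by
    rw [sub_nonneg]; apply one_div_le_one_div_of_le <;> linarith
  have h4 : 1 / (2 * s) - 1 / y ≤ 1 / 2 := by
    rw [div_sub_div _ _ (by positivity) (by positivity), div_le_div_iff₀ (by positivity) (by positivity)]
    have : y ^ 2 ≤ 13 / 10 * y := by nlinarith
    nlinarith [mul_pos h0 h0, mul_pos (mul_pos h0 h0) h0]
  rw [e2]
  have := (abs_le.1 hW).1
  nlinarith

lemma pow_sum_A : ∑ m ∈ Finset.range 41, (9 / 10 : ℝ) ^ m / (m : ℝ) ≤ 2.31 := by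
  norm_num [Finset.sum_range_succ]

lemma pow_sum_B : ∑' m : ℕ, (9 / 10 : ℝ) ^ (m + 41) / ((m + 41 : ℕ) : ℝ) ≤ 0.00325 := by
  have hs := summable_pow_div (9 / 10) (by norm_num) (by norm_num)
  have hg := (hasSum_geometric_of_lt_one (r := (9 / 10 : ℝ)) (by norm_num) (by norm_num)).mul_left
      ((9 / 10 : ℝ) ^ 41 / 41)
  refine (Summable.tsum_le_tsum (fun m => ?_) ((summable_nat_add_iff 41).2 hs) hg.summable).trans ?_
  · rw [pow_add]
    have : (41 : ℝ) ≤ ((m + 41 : ℕ) : ℝ) := by push_cast; nlinarith [Nat.cast_nonneg (α := ℝ) m]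
    rw [div_le_iff₀ (by positivity)]
    have : 0 ≤ (9 / 10 : ℝ) ^ 41 * (9 / 10) ^ m := by positivity
    calc (9 / 10 : ℝ) ^ m * (9 / 10) ^ 41 = (9 / 10 : ℝ) ^ 41 / 41 * (9 / 10) ^ m * 41 := by ring
      _ ≤ _ := by gcongr
  · rw [hg.tsum_eq]; norm_num

/-- error terms -/
noncomputable def err (C D : ℝ) (m : ℕ) : ℝ :=
  (if m < 41 then C else D) * ((9 / 10 : ℝ) ^ m / (m : ℝ))

lemma err_summable (C D : ℝ) : Summable (err C D) := by
  have hs := summable_pow_div (9 / 10) (by norm_num) (by norm_num)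
  refine Summable.of_norm_bounded (hs.mul_left (|C| + |D|)) (fun m => ?_)
  unfold err
  rw [norm_mul, norm_of_nonneg (show 0 ≤ (9 / 10 : ℝ) ^ m / (m : ℝ) by positivity)]
  gcongr
  split_ifs <;> simp

lemma err_tsum (C D : ℝ) (hC : 0 ≤ C) (hD : 0 ≤ D) :
    ∑' m, err C D m ≤ C * 2.31 + D * 0.00325 := by
  rw [← (err_summable C D).sum_add_tsum_nat_add 41]
  have h1 : ∑ m ∈ Finset.range 41, err C D m =
      C * ∑ m ∈ Finset.range 41, (9 / 10 : ℝ) ^ m / (m : ℝ) := by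
    rw [Finset.mul_sum]
    refine Finset.sum_congr rfl (fun m hm => ?_)
    rw [Finset.mem_range] at hm
    simp [err, hm]
  have h2 : ∀ m : ℕ, err C D (m + 41) = D * ((9 / 10 : ℝ) ^ (m + 41) / ((m + 41 : ℕ) : ℝ)) := by
    intro m; simp [err]
  simp_rw [h2]
  rw [h1, tsum_mul_left]
  have := mul_le_mul_of_nonneg_left pow_sum_A hC
  have := mul_le_mul_of_nonneg_left pow_sum_B hD
  linarith

/-- the smoothed log product -/
noncomputable def V (n : ℕ) (θ : ℝ) : ℝ :=
  ∑ k ∈ Finset.Icc 1 n, log (1 + (9 / 10) ^ 2 - 2 * (9 / 10) * cos (k * θ)) / 2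

lemma V_hasSum (n : ℕ) (θ : ℝ) :
    HasSum (fun m : ℕ => (9 / 10 : ℝ) ^ m / m * (-S n (m * θ))) (V n θ) := by
  have h := hasSum_sum (s := Finset.Icc 1 n)
    (fun k _ => hasSum_log (9 / 10) (by norm_num) (by norm_num) (k * θ))
  have h := h.neg
  have e1 : (fun m : ℕ => (9 / 10 : ℝ) ^ m / m * (-S n (m * θ))) =
      fun m : ℕ => -∑ i ∈ Finset.Icc 1 n, (9 / 10 : ℝ) ^ m * cos (m * (i * θ)) / m := by
    funext m
    unfold S
    rw [← Finset.sum_neg_distrib, Finset.mul_sum, ← Finset.sum_neg_distrib]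
    refine Finset.sum_congr rfl (fun k _ => ?_)
    rw [show (m : ℝ) * (k * θ) = k * (m * θ) by ring]
    ring
  have e2 : V n θ = -∑ i ∈ Finset.Icc 1 n,
      -(log (1 + (9 / 10) ^ 2 - 2 * (9 / 10) * cos (i * θ)) / 2) := by
    unfold V; rw [← Finset.sum_neg_distrib]; simp
  rw [e1, e2]; exact h

lemma P_le_V (n : ℕ) (θ : ℝ) : |P n θ| ≤ exp (n * 0.0527 + V n θ) := by
  unfold P V
  rw [Finset.abs_prod]
  have : (n : ℝ) * 0.0527 = ∑ k ∈ Finset.Icc 1 n, (0.0527 : ℝ) := by simp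
  rw [this, ← Finset.sum_add_distrib, exp_sum]
  refine Finset.prod_le_prod (fun k _ => abs_nonneg _) (fun k _ => ?_)
  have hp := F_arg_pos (9 / 10) (by norm_num) (by norm_num) (k * θ)
  set c := cos (k * θ) with hc
  have hs : (2 * sin (k * θ / 2)) ^ 2 = 2 - 2 * c := by
    rw [hc, show (k : ℝ) * θ = 2 * (k * θ / 2) by ring, cos_two_mul, mul_pow, sin_sq]
    rw [show 2 * ((k : ℝ) * θ / 2) / 2 = (k : ℝ) * θ / 2 by ring]; ring
  refine abs_le_of_sq_le_sq ?_ (exp_pos _).le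
  rw [hs, ← exp_nat_mul]
  have e : ((2 : ℕ) : ℝ) * (0.0527 + log (1 + (9 / 10) ^ 2 - 2 * (9 / 10) * c) / 2) =
    2 * 0.0527 + log (1 + (9 / 10) ^ 2 - 2 * (9 / 10) * c) := by push_cast; ring
  rw [e, exp_add, exp_log hp]
  have h1 : (400 / 361 : ℝ) ≤ exp (2 * 0.0527) := by
    have h2 := Real.add_one_le_exp (0.0527 : ℝ)
    rw [show (2 * 0.0527 : ℝ) = 0.0527 + 0.0527 by ring, exp_add]
    nlinarith
  have hc1 := neg_one_le_cos (k * θ)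
  have hc2 := cos_le_one (k * θ)
  have := mul_le_mul_of_nonneg_right h1 hp.le
  refine le_trans ?_ this
  nlinarith

lemma V_case_none (n : ℕ) (θ : ℝ) (h : ∀ m : ℕ, 1 ≤ m → m ≤ 40 → 0.01 ≤ |sin (m * θ / 2)|) :
    V n θ ≤ 50.5 * 2.31 + n * 0.00325 := by
  refine le_trans ?_ (err_tsum 50.5 n (by norm_num) (by positivity))
  rw [← (V_hasSum n θ).tsum_eq]
  refine Summable.tsum_le_tsum (fun m => ?_) (V_hasSum n θ).summable (err_summable _ _)
  rcases Nat.eq_zero_or_pos m with h0 | h0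
  · subst h0; simp [err]
  unfold err
  rw [mul_comm]
  refine mul_le_mul_of_nonneg_right ?_ (by positivity)
  refine (neg_le_abs _).trans ?_
  split_ifs with hm
  · refine (S_abs_le_of_sin n _ 0.01 (by norm_num) (h m h0 (by omega))).trans ?_
    norm_num
  · exact S_abs_le n _

end Pf

namespace Pf
open Real

lemma sin_rat_lower (q : ℕ) (hq : 1 ≤ q) (a : ℤ) (h : ¬ (q : ℤ) ∣ a) :
    2 / (q : ℝ) ≤ |sin (π * a / q)| := by
  have hq' : (0 : ℝ) < q := by exact_mod_cast hq
  have hqz : (0 : ℤ) < q := by exact_mod_cast hq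
  have e := Int.emod_add_mul_ediv a q
  set s := a % q with hs
  have h0 : 0 ≤ s := Int.emod_nonneg _ (by omega)
  have h1 : s < q := Int.emod_lt_of_pos _ hqz
  have h2 : s ≠ 0 := fun h3 => h (Int.dvd_of_emod_eq_zero h3)
  have e2 : (a : ℝ) = s + q * (a / q : ℤ) := by exact_mod_cast e.symm
  have e3 : π * a / q = π * s / q + (a / q : ℤ) * π := by
    rw [e2]; field_simp
  have habs : |sin (π * a / q)| = |sin (π * s / q)| := by
    rw [e3, Real.sin_add_int_mul_pi, abs_mul]
    simp [abs_zpow]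
  have hs1 : (1 : ℝ) ≤ s := by exact_mod_cast (by omega : 1 ≤ s)
  have hs2 : (s : ℝ) + 1 ≤ q := by exact_mod_cast (by omega : s + 1 ≤ q)
  rw [habs]
  refine le_trans ?_ (le_abs_self _)
  have hp := pi_pos
  rcases le_total (2 * (s : ℝ)) q with h5 | h5
  · have := Real.mul_le_sin (x := π * s / q) (by positivity) (by
      rw [div_le_div_iff₀ hq' (by norm_num)]; nlinarith)
    refine le_trans ?_ this
    rw [show 2 / π * (π * s / q) = 2 * s / q by field_simp]
    gcongr; linarith
  · have e4 : sin (π * s / q) = sin (π * (q - s) / q) := by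
      rw [← Real.sin_pi_sub]; congr 1; field_simp
    have := Real.mul_le_sin (x := π * (q - s) / q) (by
      apply div_nonneg _ hq'.le; nlinarith) (by
      rw [div_le_div_iff₀ hq' (by norm_num)]; nlinarith)
    rw [e4]
    refine le_trans ?_ this
    rw [show 2 / π * (π * (q - s) / q) = 2 * (q - s) / q by field_simp]
    gcongr; linarith

lemma abs_sin_add_ge (x y : ℝ) : |sin x| - |y| ≤ |sin (x + y)| := by
  have h : |sin x - sin (x + y)| ≤ |y| := by
    have := Real.abs_sin_sub_sin_le x (x + y)
    simpa using this
  have := abs_sub_abs_le_abs_sub (sin x) (sin (x + y))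
  linarith

lemma V_case_near (n : ℕ) (θ : ℝ) (q : ℕ) (hq1 : 1 ≤ q) (hq2 : q ≤ 40) (p : ℤ) (η : ℝ)
    (hη : q * θ / 2 = p * π + η) (hη2 : |η| ≤ 0.0158)
    (hcop : ∀ m : ℕ, ¬ q ∣ m → ¬ (q : ℤ) ∣ m * p)
    (hF : -F ((9 / 10) ^ q) ((n + 1 / 2) * (2 * |η|)) ≤ q * 0.116 * ((n + 1 / 2) * (2 * |η|))) :
    V n θ ≤ 0.116 * (n + 1 / 2) + 16 * 2.31 + (2 * n + 1) * 0.00325 := by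
  set h := 2 * |η| with hh
  set w := (n + 1 / 2 : ℝ) * h with hw
  have hh0 : 0 ≤ h := by positivity
  have hq' : (0 : ℝ) < q := by exact_mod_cast hq1
  let s : ℕ → ℝ := fun m => if q ∣ m then
    (9 / 10 : ℝ) ^ m / m * (-(sin ((m / q : ℕ) * w) / ((m / q : ℕ) * h))) else 0
  have hsum : HasSum s (-(F ((9 / 10) ^ q) w / (q * h))) := by
    have hi : Function.Injective (fun j : ℕ => q * j) :=
      fun x y hxy => Nat.eq_of_mul_eq_mul_left (by omega) hxy
    rw [← hi.hasSum_iff]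
    · have hFs := (F_summable ((9 / 10 : ℝ) ^ q) (by positivity)
        (pow_lt_one₀ (by norm_num) (by norm_num) (by omega)) w).hasSum
      have := (hFs.div_const (q * h)).neg
      have e : s ∘ (fun j : ℕ => q * j) =
          fun j : ℕ => -(((9 / 10 : ℝ) ^ q) ^ j * sin (j * w) / (j : ℝ) ^ 2 / (q * h)) := by
        funext j
        simp only [Function.comp, s]
        rw [if_pos (Dvd.intro j rfl), Nat.mul_div_cancel_left _ (by omega), pow_mul]
        push_cast
        rcases Nat.eq_zero_or_pos j with hj | hj
        · subst hj; simp
        · have : (j : ℝ) ≠ 0 := by positivity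
          rcases eq_or_ne h 0 with h00 | h00
          · rw [h00]; simp
          · field_simp
      rw [e]; exact this
    · intro m hm
      simp only [s]
      rw [if_neg]
      rintro ⟨j, rfl⟩
      exact hm ⟨j, rfl⟩
  have hle : V n θ ≤ -(F ((9 / 10) ^ q) w / (q * h)) + ∑' m, err 16 (2 * n + 1) m := by
    rw [← (V_hasSum n θ).tsum_eq, ← hsum.tsum_eq, ← Summable.tsum_add hsum.summable (err_summable _ _)]
    refine Summable.tsum_le_tsum (fun m => ?_) (V_hasSum n θ).summable
      (hsum.summable.add (err_summable _ _))
    rcases Nat.eq_zero_or_pos m with h0 | h0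
    · subst h0; simp [err, s]
    unfold err
    have hpos : 0 ≤ (9 / 10 : ℝ) ^ m / m := by positivity
    by_cases hd : q ∣ m
    · simp only [s, if_pos hd]
      obtain ⟨j, rfl⟩ := hd
      rw [Nat.mul_div_cancel_left _ (by omega), mul_comm (ite _ _ _), ← mul_add]
      refine mul_le_mul_of_nonneg_left ?_ hpos
      have hj : 1 ≤ j := by
        rcases Nat.eq_zero_or_pos j with hj | hj
        · subst hj; simp at h0
        · exact hj
      have hj' : (1 : ℝ) ≤ j := by exact_mod_cast hj
      have eS : S n ((q * j : ℕ) * θ) = S n (j * h) := by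
        unfold S
        refine Finset.sum_congr rfl (fun k _ => ?_)
        have e1 : (k : ℝ) * ((q * j : ℕ) * θ) = 2 * (k * j * η) + ((k * j * p : ℤ) : ℝ) * (2 * π) := by
          push_cast
          linear_combination (2 * (k : ℝ) * j) * hη
        rw [e1, Real.cos_add_int_mul_two_pi]
        rw [← Real.cos_abs]
        congr 1
        rw [hh, abs_mul, abs_mul, abs_mul, Nat.abs_cast, Nat.abs_cast]
        simp; ring
      rw [eS]
      rcases eq_or_lt_of_le hh0 with h00 | h00
      · rw [← h00]
        simp only [mul_zero, div_zero, neg_zero, zero_add]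
        have : S n 0 = n := by simp [S]
        rw [this]
        split_ifs <;> linarith [Nat.cast_nonneg (α := ℝ) n]
      · have ew : (j : ℝ) * w = (n + 1 / 2) * (j * h) := by rw [hw]; ring
        split_ifs with hm
        · have hj40 : (j : ℝ) ≤ 40 := by
            have : j ≤ 40 := by nlinarith
            exact_mod_cast this
          have := S_near n (j * h) (by positivity) (by nlinarith)
          rw [ew]
          linarith
        · have h1 := (abs_le.1 (S_abs_le n (j * h))).1
          have h2 : sin (j * w) / (j * h) ≤ n + 1 / 2 := by
            rw [div_le_iff₀ (by positivity), ← ew]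
            exact sin_le (by positivity)
          linarith
    · simp only [s, if_neg hd, zero_add]
      rw [mul_comm]
      refine mul_le_mul_of_nonneg_right ?_ hpos
      refine (neg_le_abs _).trans ?_
      split_ifs with hm
      · have h1 := sin_rat_lower q hq1 (m * p) (hcop m hd)
        have e1 : (m : ℝ) * θ / 2 = π * ((m * p : ℤ) : ℝ) / q + m * η / q := by
          push_cast
          have h5 : θ / 2 = (p * π + η) / q := by rw [← hη]; field_simp
          rw [mul_div_assoc, h5]
          ring
        have h2 := abs_sin_add_ge (π * ((m * p : ℤ) : ℝ) / q) (m * η / q)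
        rw [← e1] at h2
        have hm40 : (m : ℝ) ≤ 40 := by exact_mod_cast (by omega : m ≤ 40)
        have h3 : |(m : ℝ) * η / q| ≤ 0.632 / q := by
          rw [abs_div, abs_mul, Nat.abs_cast, Nat.abs_cast]
          gcongr
          nlinarith [abs_nonneg η, Nat.cast_nonneg (α := ℝ) m]
        have hq40 : (q : ℝ) ≤ 40 := by exact_mod_cast hq2
        have h4 : (0.0342 : ℝ) ≤ 2 / q - 0.632 / q := by
          rw [← sub_div, le_div_iff₀ hq']; nlinarith
        refine (S_abs_le_of_sin n _ 0.0342 (by norm_num) (by linarith)).trans ?_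
        norm_num
      · have := S_abs_le n (m * θ)
        linarith [Nat.cast_nonneg (α := ℝ) n]
  refine hle.trans ?_
  have he := err_tsum 16 (2 * n + 1) (by norm_num) (by positivity)
  have hlast : -(F ((9 / 10) ^ q) w / (q * h)) ≤ 0.116 * (n + 1 / 2) := by
    rcases eq_or_lt_of_le hh0 with h00 | h00
    · rw [← h00]; simp; positivity
    · rw [← neg_div, div_le_iff₀ (by positivity)]
      refine hF.trans (le_of_eq ?_)
      rw [hw]; ring
  linarith

theorem tail_V (n : ℕ) (hn : 2 ≤ n) (θ : ℝ) (h1 : 2 * π / n ≤ θ) (h2 : θ ≤ π) :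
    V n θ ≤ max (50.5 * 2.31 + n * 0.00325 : ℝ)
      (0.116 * (n + 1 / 2) + 16 * 2.31 + (2 * n + 1) * 0.00325) := by
  by_cases hc : ∀ m : ℕ, 1 ≤ m → m ≤ 40 → 0.01 ≤ |sin (m * θ / 2)|
  · exact (V_case_none n θ hc).trans (le_max_left _ _)
  refine le_trans ?_ (le_max_right _ _)
  push Not at hc
  classical
  let q := Nat.find hc
  obtain ⟨hq1, hq2, hq3⟩ := Nat.find_spec hc
  have hmin : ∀ m < q, ¬ (1 ≤ m ∧ m ≤ 40 ∧ |sin (m * θ / 2)| < 0.01) := fun m hm => Nat.find_min hc hm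
  change 1 ≤ q at hq1
  change q ≤ 40 at hq2
  change |sin (q * θ / 2)| < 0.01 at hq3
  clear_value q
  have hp := pi_pos
  have hq' : (0 : ℝ) < q := by exact_mod_cast hq1
  have hn' : (2 : ℝ) ≤ n := by exact_mod_cast hn
  let p : ℤ := round (q * θ / 2 / π)
  let η : ℝ := q * θ / 2 - p * π
  have hη : q * θ / 2 = p * π + η := by simp only [η]; ring
  have hη1 : |η| ≤ π / 2 := by
    have := abs_sub_round ((q : ℝ) * θ / 2 / π)
    have e : η = (q * θ / 2 / π - p) * π := by simp only [η]; field_simp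
    rw [e, abs_mul, abs_of_pos hp]
    nlinarith
  have hsη : |sin (q * θ / 2)| = |sin η| := by
    rw [hη, add_comm, Real.sin_add_int_mul_pi, abs_mul]; simp [abs_zpow]
  have hη3 : |η| ≤ 0.0158 := by
    have := Real.mul_abs_le_abs_sin hη1
    rw [← hsη] at this
    have h4 := pi_lt_d4
    have h5 : 2 / π * |η| < 0.01 := by linarith
    rw [div_mul_eq_mul_div, div_lt_iff₀ hp] at h5
    linarith
  clear_value p η
  refine V_case_near n θ q hq1 hq2 p η hη hη3 ?_ ?_
  · -- coprimality
    have hg : Int.gcd (q : ℤ) p = 1 := by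
      by_contra hne
      set g := Int.gcd (q : ℤ) p with hgdef
      have hg0 : 0 < g := Int.gcd_pos_of_ne_zero_left _ (by omega)
      have hg2 : 2 ≤ g := by omega
      obtain ⟨q', hq'e⟩ : g ∣ q := by exact_mod_cast Int.gcd_dvd_left (a := (q : ℤ)) (b := p)
      obtain ⟨p', hp'e⟩ : (g : ℤ) ∣ p := Int.gcd_dvd_right _ _
      have hq'1 : 1 ≤ q' := by
        rcases Nat.eq_zero_or_pos q' with hj | hj
        · subst hj; omega
        · exact hj
      have hlt : q' < q := by nlinarith
      apply hmin q' hlt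
      refine ⟨hq'1, by omega, ?_⟩
      have hg' : (2 : ℝ) ≤ g := by exact_mod_cast hg2
      have e1 : (q : ℝ) = g * q' := by exact_mod_cast hq'e
      have e2 : (p : ℝ) = g * p' := by exact_mod_cast hp'e
      have e3 : (q' : ℝ) * θ / 2 = η / g + p' * π := by
        field_simp
        rw [e1, e2] at hη
        linear_combination 2 * hη
      rw [e3, Real.sin_add_int_mul_pi, abs_mul]
      simp only [abs_zpow, abs_neg, abs_one, one_zpow, one_mul]
      refine lt_of_le_of_lt ?_ hq3
      rw [hsη]
      have e4 : ∀ x : ℝ, |x| ≤ π / 2 → |sin x| = sin |x| := by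
        intro x hx
        rw [Real.abs_sin_eq_sin_abs_of_abs_le_pi (by linarith)]
      have hle : |η / g| ≤ |η| := by
        rw [abs_div, Nat.abs_cast]
        exact div_le_self (abs_nonneg _) (by linarith)
      rw [e4 _ hη1, e4 _ (hle.trans hη1)]
      exact Real.sin_le_sin_of_le_of_le_pi_div_two (by linarith [abs_nonneg (η / g)]) hη1 hle
    intro m hm hdiv
    apply hm
    have := Int.dvd_of_dvd_mul_left_of_gcd_one hdiv hg
    exact_mod_cast this
  · have hw0 : 0 ≤ (n + 1 / 2 : ℝ) * (2 * |η|) := by positivity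
    rcases eq_or_lt_of_le hq1 with hqe | hqe
    · subst hqe
      have hbig : π / n ≤ |η| := by
        have hθ : η = θ / 2 - p * π := by push_cast at hη; linarith
        have hn2 : π / n ≤ π / 2 := by gcongr
        have h11 : π / n ≤ θ / 2 := by
          have : 2 * π / n = 2 * (π / n) := by ring
          linarith
        rw [hθ]
        rcases le_or_gt p 0 with hp0 | hp0
        · have : (p : ℝ) ≤ 0 := by exact_mod_cast hp0
          refine le_trans ?_ (le_abs_self _)
          nlinarith
        · have : (1 : ℝ) ≤ p := by exact_mod_cast hp0
          refine le_trans ?_ (neg_le_abs _)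
          nlinarith
      have := F_bound_one ((n + 1 / 2 : ℝ) * (2 * |η|)) (by
        have h5 : (n : ℝ) * (π / n) = π := by field_simp
        have h6 : (n : ℝ) * (π / n) ≤ n * |η| := by gcongr
        nlinarith [abs_nonneg η])
      simpa using this
    · have hr : ((9 / 10 : ℝ)) ^ q ≤ 81 / 100 := by
        calc ((9 / 10 : ℝ)) ^ q ≤ (9 / 10) ^ 2 :=
              pow_le_pow_of_le_one (by norm_num) (by norm_num) (by omega)
          _ = 81 / 100 := by norm_num
      have := F_bound_two ((9 / 10) ^ q) (by positivity) hr _ hw0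
      have hq2' : (2 : ℝ) ≤ q := by exact_mod_cast hqe
      nlinarith

theorem tail_P (θ : ℝ) (h1 : 2 * π / 5909 ≤ θ) (h2 : θ ≤ π) : |P 5909 θ| ≤ exp 1080 := by
  refine (P_le_V 5909 θ).trans (exp_le_exp.2 ?_)
  have := tail_V 5909 (by norm_num) θ (by exact_mod_cast h1) h2
  rw [max_def] at this
  split_ifs at this <;> · push_cast at *; linarith

end Pf

namespace Pf
open Real

lemma abs_P_root (N : ℕ) (hN : 2 ≤ N) : |P (N - 1) (2 * π / N)| = N := by
  obtain ⟨n, rfl⟩ : ∃ n, N = n + 1 := ⟨N - 1, by omega⟩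
  have h := prod_eval n (2 * π / (n + 1 : ℕ))
  have hζ := Complex.isPrimitiveRoot_exp (n + 1) (by omega)
  have h2 := hζ.prod_one_sub_pow_eq_order
  have e : Complex.exp (((2 * π / (n + 1 : ℕ) : ℝ) : ℂ) * Complex.I) =
      Complex.exp (2 * π * Complex.I / (n + 1 : ℕ)) := by
    congr 1; push_cast; ring
  rw [e] at h
  have h3 : ∏ k ∈ Finset.Icc 1 n, (1 - Complex.exp (2 * π * Complex.I / (n + 1 : ℕ)) ^ k) =
      ∏ k ∈ Finset.range n, (1 - Complex.exp (2 * π * Complex.I / (n + 1 : ℕ)) ^ (k + 1)) := by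
    rw [Finset.range_eq_Ico, Finset.prod_Ico_add' (fun k =>
      (1 - Complex.exp (2 * π * Complex.I / (n + 1 : ℕ)) ^ k)) 0 n 1]
    rfl
  rw [h3, h2] at h
  have h4 := congrArg norm h
  rw [norm_mul, norm_mul, norm_pow, norm_neg, Complex.norm_I, one_pow, one_mul,
    Complex.norm_exp_ofReal_mul_I, mul_one, Complex.norm_real] at h4
  simp only [Nat.add_sub_cancel]
  rw [← Real.norm_eq_abs, ← h4]
  norm_cast

lemma P_pos (n : ℕ) (θ : ℝ) (h0 : 0 < θ) (h1 : n * θ < 2 * π) : 0 < P n θ := by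
  unfold P
  refine Finset.prod_pos (fun k hk => ?_)
  rw [Finset.mem_Icc] at hk
  have h2 : (1 : ℝ) ≤ k := by exact_mod_cast hk.1
  have h3 : (k : ℝ) ≤ n := by exact_mod_cast hk.2
  have := sin_pos_of_pos_of_lt_pi (x := k * θ / 2) (by positivity) (by nlinarith)
  linarith

lemma P_chain (N j : ℕ) (hj : j < N) :
    (N : ℝ) ≤ P (N - 1 - j) (2 * π / N) * ((6.2832 / N) ^ j * j.factorial) := by
  have hN : (0 : ℝ) < N := by exact_mod_cast (by omega : 0 < N)
  have hpos : ∀ m : ℕ, m < N → 0 < P m (2 * π / N) := by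
    intro m hm
    refine P_pos _ _ (by positivity) ?_
    have : (m : ℝ) < N := by exact_mod_cast hm
    rw [mul_div_assoc', div_lt_iff₀ hN]
    nlinarith [pi_pos]
  induction j with
  | zero =>
    rcases Nat.lt_or_ge N 2 with h | h
    · have : N = 1 := by omega
      subst this; simp [P]
    · have := abs_P_root N h
      rw [abs_of_pos (hpos _ (by omega))] at this
      simp [this]
  | succ j ih =>
    have ih := ih (by omega)
    refine ih.trans ?_
    have e : N - 1 - j = (N - 1 - (j + 1)) + 1 := by omega
    have hr : P (N - 1 - j) (2 * π / N) = P (N - 1 - (j + 1)) (2 * π / N) *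
        (2 * sin ((N - 1 - j : ℕ) * (2 * π / N) / 2)) := by
      rw [e]; unfold P; rw [Finset.prod_Icc_succ_top (by omega)]
    have hs : sin ((N - 1 - j : ℕ) * (2 * π / N) / 2) ≤ 3.1416 * (j + 1) / N := by
      have e2 : ((N - 1 - j : ℕ) : ℝ) = N - 1 - j := by
        rw [Nat.cast_sub (by omega), Nat.cast_sub (by omega)]; simp
      rw [e2, ← Real.sin_pi_sub]
      refine (Real.sin_le ?_).trans ?_
      · have : ((N : ℝ) - 1 - j) * (2 * π / N) / 2 = π - (j + 1) * π / N := by field_simp; ring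
        rw [this]
        have : 0 ≤ ((j : ℝ) + 1) * π / N := by positivity
        linarith
      · have : π - ((N : ℝ) - 1 - j) * (2 * π / N) / 2 = π * (j + 1) / N := by field_simp; ring
        rw [this]
        gcongr
        linarith [pi_lt_d4]
    rw [hr, Nat.factorial_succ, pow_succ]
    have hp := hpos (N - 1 - (j + 1)) (by omega)
    push_cast
    have h0 : 0 ≤ P (N - 1 - (j + 1)) (2 * π / N) * (2 * ((6.2832 / N) ^ j * j.factorial)) := by
      positivity
    have := mul_le_mul_of_nonneg_left hs h0
    calc _ = P (N - 1 - (j + 1)) (2 * π / N) * (2 * ((6.2832 / N) ^ j * j.factorial)) *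
          sin ((N - 1 - j : ℕ) * (2 * π / N) / 2) := by ring
      _ ≤ _ := this
      _ = _ := by ring

set_option exponentiation.threshold 100000 in
lemma big_num : 62832^1450*Nat.factorial 1450*27182818286^1130 ≤
    7360^1451*10^(4*1450)*10^(10*1130) := by norm_num only [Nat.factorial]

lemma P0_abs (N f a b c d p : ℝ) (J K : ℕ) (hN : 0 < N) (hf : 0 < f) (ha : 0 < a)
    (hc : 0 < c) (hd : 0 < d) (h : a ^ J * f * b ^ K ≤ N ^ (J + 1) * c ^ J * d ^ K)
    (h2 : N ≤ p * ((a / c / N) ^ J * f)) : (b / d) ^ K ≤ p := by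
  have h3 : 0 < (a / c / N) ^ J * f := by positivity
  refine le_of_mul_le_mul_right (le_trans ?_ h2) h3
  rw [div_pow, div_pow, div_pow]
  have : b ^ K / d ^ K * (a ^ J / c ^ J / N ^ J * f) = a ^ J * f * b ^ K / (c ^ J * d ^ K * N ^ J) := by
    field_simp
  rw [this, div_le_iff₀ (by positivity)]
  refine h.trans (le_of_eq ?_)
  ring

set_option exponentiation.threshold 100000 in
lemma P0_lower : exp 1130 ≤ P 5909 (2 * π / 7360) := by
  have h := P_chain 7360 1450 (by norm_num)
  have e : (7360 - 1 - 1450 : ℕ) = 5909 := by norm_num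
  rw [e] at h
  push_cast at h
  have h1 : exp 1130 ≤ (27182818286 / 10 ^ 10) ^ 1130 := by
    rw [show (1130 : ℝ) = (1130 : ℕ) * 1 by norm_num, exp_nat_mul]
    gcongr
    have := Real.exp_one_lt_d9
    norm_num at this ⊢
    linarith
  have h2 : ((62832^1450*Nat.factorial 1450*27182818286^1130 : ℕ) : ℝ) ≤
    ((7360^1451*10^(4*1450)*10^(10*1130) : ℕ) : ℝ) := Nat.cast_le.2 big_num
  refine h1.trans ?_
  refine P0_abs 7360 (Nat.factorial 1450 : ℕ) 62832 27182818286 (10 ^ 4) (10 ^ 10) _ 1450 1130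
    (by norm_num) (by positivity) (by norm_num) (by norm_num) (by norm_num) ?_ ?_
  · rw [← pow_mul, ← pow_mul]
    rw [Nat.cast_mul, Nat.cast_mul, Nat.cast_mul, Nat.cast_mul, Nat.cast_pow, Nat.cast_pow,
      Nat.cast_pow, Nat.cast_pow, Nat.cast_pow] at h2
    exact h2
  · rw [show (62832 / 10 ^ 4 / 7360 : ℝ) = 6.2832 / 7360 by norm_num]
    exact h

end Pf

namespace Pf
open Real

/-- log-derivative of `P` -/
noncomputable def G (n : ℕ) (θ : ℝ) : ℝ :=
  ∑ k ∈ Finset.Icc 1 n, (k / 2 : ℝ) * (cos (k * θ / 2) / sin (k * θ / 2))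

/-- lower fixed point recursion for cotangents -/
noncomputable def lowLoop (N B C D T : ℕ) (f : ℕ) : ℕ → ℕ → Bool :=
  Nat.rec (motive := fun _ => ℕ → ℕ → Bool) (fun _ acc => Nat.ble T acc)
    (fun f ih Y acc => match (Y * C - D) / (Y + B) with
      | 0 => false
      | y + 1 => match acc + (N - f) * (y + 1) with
        | 0 => false
        | s + 1 => ih (y + 1) (s + 1)) f

/-- upper fixed point recursion for cotangents -/
noncomputable def upLoop (N B C D T : ℕ) (f : ℕ) : ℕ → ℕ → Bool :=
  Nat.rec (motive := fun _ => ℕ → ℕ → Bool) (fun _ acc => Nat.ble acc T)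
    (fun f ih Y acc => match (Y * C - D) / (Y + B) + 1 with
      | 0 => false
      | y + 1 => match acc + (N - f) * (y + 1) with
        | 0 => false
        | s + 1 => ih (y + 1) (s + 1)) f

lemma low_zero (N B C D T Y acc : ℕ) (h : lowLoop N B C D T 0 Y acc = true) : T ≤ acc :=
  Nat.le_of_ble_eq_true h

lemma up_zero (N B C D T Y acc : ℕ) (h : upLoop N B C D T 0 Y acc = true) : acc ≤ T :=
  Nat.le_of_ble_eq_true h

lemma low_succ (N B C D T f Y acc : ℕ) (h : lowLoop N B C D T (f + 1) Y acc = true) :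
    0 < (Y * C - D) / (Y + B) ∧
    lowLoop N B C D T f ((Y * C - D) / (Y + B)) (acc + (N - f) * ((Y * C - D) / (Y + B))) = true := by
  have e : lowLoop N B C D T (f + 1) Y acc = match (Y * C - D) / (Y + B) with
      | 0 => false
      | y + 1 => match acc + (N - f) * (y + 1) with
        | 0 => false
        | s + 1 => lowLoop N B C D T f (y + 1) (s + 1) := rfl
  rw [e] at h
  generalize (Y * C - D) / (Y + B) = v at *
  rcases v with _ | y
  · simp at h
  · simp only at h
    refine ⟨by omega, ?_⟩
    generalize acc + (N - f) * (y + 1) = u at *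
    rcases u with _ | s
    · simp at h
    · exact h

lemma up_succ (N B C D T f Y acc : ℕ) (h : upLoop N B C D T (f + 1) Y acc = true) :
    upLoop N B C D T f ((Y * C - D) / (Y + B) + 1)
      (acc + (N - f) * ((Y * C - D) / (Y + B) + 1)) = true := by
  have e : upLoop N B C D T (f + 1) Y acc = match (Y * C - D) / (Y + B) + 1 with
      | 0 => false
      | y + 1 => match acc + (N - f) * (y + 1) with
        | 0 => false
        | s + 1 => upLoop N B C D T f (y + 1) (s + 1) := rfl
  rw [e] at h
  generalize (Y * C - D) / (Y + B) + 1 = v at *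
  rcases v with _ | y
  · simp at h
  · simp only at h
    generalize acc + (N - f) * (y + 1) = u at *
    rcases u with _ | s
    · simp at h
    · exact h

/-- shifted cotangent -/
noncomputable def ct (α : ℝ) (k : ℕ) : ℝ := cos (k * α) / sin (k * α) + 4

lemma ct_step (α : ℝ) (k : ℕ) (h0 : 0 < sin α) (hk : 0 < sin (k * α))
    (hk1 : 0 < sin ((k + 1 : ℕ) * α)) :
    0 < ct α k + (ct α 1 - 8) ∧
    ct α (k + 1) = (ct α k * (ct α 1 - 8 + 8) - 17) / (ct α k + (ct α 1 - 8)) := by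
  have e1 : ((k + 1 : ℕ) : ℝ) * α = k * α + α := by push_cast; ring
  have hs : sin (k * α + α) = sin (k * α) * cos α + cos (k * α) * sin α := sin_add _ _
  have hc : cos (k * α + α) = cos (k * α) * cos α - sin (k * α) * sin α := cos_add _ _
  rw [e1] at hk1
  have e2 : ct α k + (ct α 1 - 8) = sin (k * α + α) / (sin (k * α) * sin α) := by
    unfold ct; rw [hs]; push_cast; rw [one_mul]; field_simp; ring
  constructor
  · rw [e2]; positivity
  · rw [e2, eq_div_iff (by positivity)]
    unfold ct
    rw [e1, hc]; push_cast; rw [one_mul]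
    have hne := hk1.ne'
    generalize sin (k * α + α) = z at *
    field_simp
    rw [hs]
    ring

lemma mono_step (y b u v : ℝ) (h1 : u ≤ y) (h2 : v ≤ b) (h3 : 0 < u + v) :
    (u * (v + 8) - 17) / (u + v) ≤ (y * (b + 8) - 17) / (y + b) := by
  have h4 : 0 < y + v := by linarith
  have h5 : 0 < y + b := by linarith
  have s1 : (u * (v + 8) - 17) / (u + v) ≤ (y * (v + 8) - 17) / (y + v) := by
    rw [div_le_div_iff₀ h3 h4]
    nlinarith [mul_nonneg (sub_nonneg.2 h1) (add_nonneg (sq_nonneg (v + 4)) (zero_le_one' ℝ))]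
  have s2 : (y * (v + 8) - 17) / (y + v) ≤ (y * (b + 8) - 17) / (y + b) := by
    rw [div_le_div_iff₀ h4 h5]
    nlinarith [mul_nonneg (sub_nonneg.2 h2) (add_nonneg (sq_nonneg (y - 4)) (zero_le_one' ℝ))]
  exact s1.trans s2

lemma low_sound (N B T s : ℕ) (hs : 0 < s) (α : ℝ) (h0 : 0 < α) (h1 : N * α < π)
    (hB : (B : ℝ) ≤ s * (ct α 1 - 8)) (hB0 : 0 < B) :
    ∀ f k Y acc : ℕ, 1 ≤ k → k + f = N → (Y : ℝ) ≤ s * ct α k →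
      (acc : ℝ) ≤ s * ∑ i ∈ Finset.Icc 1 k, (i : ℝ) * ct α i →
      lowLoop N B (B + 8 * s) (17 * s ^ 2) T f Y acc = true →
      (T : ℝ) ≤ s * ∑ i ∈ Finset.Icc 1 N, (i : ℝ) * ct α i := by
  intro f
  have hs' : (0 : ℝ) < s := by exact_mod_cast hs
  induction f with
  | zero =>
    intro k Y acc hk hkf hY hacc h
    have := low_zero _ _ _ _ _ _ _ h
    have hkN : k = N := by omega
    subst hkN
    have : (T : ℝ) ≤ acc := by exact_mod_cast this
    linarith
  | succ f ih =>
    intro k Y acc hk hkf hY hacc h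
    obtain ⟨hp, hl⟩ := low_succ _ _ _ _ _ _ _ _ h
    have hN : N - f = k + 1 := by omega
    rw [hN] at hl
    have hsin : ∀ i : ℕ, 1 ≤ i → i ≤ N → 0 < sin (i * α) := by
      intro i hi1 hi2
      have h2 : (1 : ℝ) ≤ i := by exact_mod_cast hi1
      have h3 : (i : ℝ) ≤ N := by exact_mod_cast hi2
      exact sin_pos_of_pos_of_lt_pi (by positivity) (by nlinarith)
    obtain ⟨hpos, hst⟩ := ct_step α k (by simpa using hsin 1 le_rfl (by omega))
      (hsin k hk (by omega)) (hsin (k + 1) (by omega) (by omega))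
    have hY' : (((Y * (B + 8 * s) - 17 * s ^ 2) / (Y + B) : ℕ) : ℝ) ≤ s * ct α (k + 1) := by
      refine Nat.cast_div_le.trans ?_
      have hge : 17 * s ^ 2 ≤ Y * (B + 8 * s) := by
        by_contra hlt
        rw [Nat.sub_eq_zero_of_le (by omega)] at hp
        simp at hp
      rw [Nat.cast_sub hge]
      have hYB : (0 : ℝ) < Y + B := by exact_mod_cast (by omega : 0 < Y + B)
      have := mono_step (ct α k) (ct α 1 - 8) (Y / s) (B / s)
        (by rw [div_le_iff₀ hs']; linarith) (by rw [div_le_iff₀ hs']; linarith)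
        (by rw [← add_div]; positivity)
      rw [← hst] at this
      have h2 := mul_le_mul_of_nonneg_left this hs'.le
      refine le_trans (le_of_eq ?_) h2
      push_cast
      field_simp
    generalize (Y * (B + 8 * s) - 17 * s ^ 2) / (Y + B) = v at hY' hl
    refine ih (k + 1) _ _ (by omega) (by omega) hY' ?_ hl
    rw [Finset.sum_Icc_succ_top (by omega), mul_add]
    have hk0 : (0 : ℝ) ≤ ((k + 1 : ℕ) : ℝ) := by positivity
    have := mul_le_mul_of_nonneg_left hY' hk0
    rw [Nat.cast_add, Nat.cast_mul]
    linarith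

lemma up_sound (N B T s : ℕ) (hs : 0 < s) (α : ℝ) (h0 : 0 < α) (h1 : N * α < π)
    (hB : s * (ct α 1 - 8) ≤ (B : ℝ)) (hB0 : 0 < B) :
    ∀ f k Y acc : ℕ, 1 ≤ k → k + f = N → s * ct α k ≤ (Y : ℝ) →
      s * ∑ i ∈ Finset.Icc 1 k, (i : ℝ) * ct α i ≤ (acc : ℝ) →
      upLoop N B (B + 8 * s) (17 * s ^ 2) T f Y acc = true →
      s * ∑ i ∈ Finset.Icc 1 N, (i : ℝ) * ct α i ≤ (T : ℝ) := by
  intro f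
  have hs' : (0 : ℝ) < s := by exact_mod_cast hs
  induction f with
  | zero =>
    intro k Y acc hk hkf hY hacc h
    have := up_zero _ _ _ _ _ _ _ h
    have hkN : k = N := by omega
    subst hkN
    have : (acc : ℝ) ≤ T := by exact_mod_cast this
    linarith
  | succ f ih =>
    intro k Y acc hk hkf hY hacc h
    have hl := up_succ _ _ _ _ _ _ _ _ h
    have hN : N - f = k + 1 := by omega
    rw [hN] at hl
    have hsin : ∀ i : ℕ, 1 ≤ i → i ≤ N → 0 < sin (i * α) := by
      intro i hi1 hi2
      have h2 : (1 : ℝ) ≤ i := by exact_mod_cast hi1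
      have h3 : (i : ℝ) ≤ N := by exact_mod_cast hi2
      exact sin_pos_of_pos_of_lt_pi (by positivity) (by nlinarith)
    obtain ⟨hpos, hst⟩ := ct_step α k (by simpa using hsin 1 le_rfl (by omega))
      (hsin k hk (by omega)) (hsin (k + 1) (by omega) (by omega))
    have hY' : s * ct α (k + 1) ≤ (((Y * (B + 8 * s) - 17 * s ^ 2) / (Y + B) + 1 : ℕ) : ℝ) := by
      have hYB : (0 : ℝ) < Y + B := by exact_mod_cast (by omega : 0 < Y + B)
      have h5 : (((Y * (B + 8 * s) - 17 * s ^ 2 : ℕ) : ℝ)) / (Y + B) ≤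
          (((Y * (B + 8 * s) - 17 * s ^ 2) / (Y + B) + 1 : ℕ) : ℝ) := by
        rw [div_le_iff₀ hYB]
        have := Nat.lt_mul_div_succ (Y * (B + 8 * s) - 17 * s ^ 2) (b := Y + B) (by omega)
        have := this.le
        rw [mul_comm (Y + B)] at this
        exact_mod_cast this
      refine le_trans ?_ h5
      have := mono_step (Y / s) (B / s) (ct α k) (ct α 1 - 8)
        (by rw [le_div_iff₀ hs']; linarith) (by rw [le_div_iff₀ hs']; linarith) hpos
      rw [← hst] at this
      have h2 := mul_le_mul_of_nonneg_left this hs'.le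
      refine h2.trans ?_
      have h6 : (Y * (B + 8 * s) - 17 * s ^ 2 : ℝ) ≤ ((Y * (B + 8 * s) - 17 * s ^ 2 : ℕ) : ℝ) := by
        have h7 : Y * (B + 8 * s) ≤ (Y * (B + 8 * s) - 17 * s ^ 2) + 17 * s ^ 2 := by omega
        have h8 : ((Y * (B + 8 * s) : ℕ) : ℝ) ≤
          (((Y * (B + 8 * s) - 17 * s ^ 2) + 17 * s ^ 2 : ℕ) : ℝ) := by exact_mod_cast h7
        rw [Nat.cast_add] at h8
        push_cast at h8 ⊢
        linarith
      refine le_trans (le_of_eq ?_) (div_le_div_of_nonneg_right h6 hYB.le)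
      field_simp
    generalize (Y * (B + 8 * s) - 17 * s ^ 2) / (Y + B) + 1 = v at hY' hl
    refine ih (k + 1) _ _ (by omega) (by omega) hY' ?_ hl
    rw [Finset.sum_Icc_succ_top (by omega), mul_add]
    have hk0 : (0 : ℝ) ≤ ((k + 1 : ℕ) : ℝ) := by positivity
    have := mul_le_mul_of_nonneg_left hY' hk0
    push_cast at this ⊢
    linarith

lemma sum_ct (n : ℕ) (α : ℝ) :
    ∑ i ∈ Finset.Icc 1 n, (i : ℝ) * ct α i = 2 * G n (2 * α) + 2 * (n * (n + 1)) := by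
  induction n with
  | zero => simp [G]
  | succ n ih =>
    have hG : G (n + 1) (2 * α) = G n (2 * α) + (((n + 1 : ℕ) : ℝ) / 2) *
        (cos ((n + 1 : ℕ) * (2 * α) / 2) / sin ((n + 1 : ℕ) * (2 * α) / 2)) := by
      unfold G; rw [Finset.sum_Icc_succ_top (by omega)]
    rw [Finset.sum_Icc_succ_top (by omega), ih, hG]
    unfold ct
    rw [show ((n + 1 : ℕ) : ℝ) * (2 * α) / 2 = (n + 1 : ℕ) * α by ring]
    push_cast; ring

/-- cotangent bounds for small angles -/
lemma cot_lower (α : ℝ) (h0 : 0 < α) (h1 : α ≤ 1) :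
    (1 - α ^ 2 / 2 - α ^ 4 * (5 / 96)) / (α - α ^ 3 / 6 + α ^ 5 / 100) ≤ cos α / sin α := by
  have hc := abs_le.1 (Real.cos_bound (x := α) (by rw [abs_of_pos h0]; exact h1))
  have hs := abs_le.1 (Real.sin_bound (x := α) (by rw [abs_of_pos h0]; exact h1))
  rw [abs_of_pos h0] at hc hs
  have hsp : 0 < sin α := sin_pos_of_pos_of_lt_pi h0 (by linarith [pi_gt_three])
  rw [div_le_div_iff₀ (by linarith [hs.2]) hsp]
  have hcp : 0 ≤ cos α := cos_nonneg_of_neg_pi_div_two_le_of_le (by linarith [pi_pos]) (by linarith [pi_gt_three])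
  calc _ ≤ cos α * sin α := by gcongr; linarith [hc.1]
    _ ≤ _ := by gcongr; linarith [hs.2]

lemma cot_upper (α : ℝ) (h0 : 0 < α) (h1 : α ≤ 1) :
    cos α / sin α ≤ (1 - α ^ 2 / 2 + α ^ 4 * (5 / 96)) / (α - α ^ 3 / 6) := by
  have hc := abs_le.1 (Real.cos_bound (x := α) (by rw [abs_of_pos h0]; exact h1))
  have hs := Real.sin_gt_sub_cube h0
  rw [abs_of_pos h0] at hc
  have hsp : 0 < sin α := sin_pos_of_pos_of_lt_pi h0 (by linarith [pi_gt_three])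
  have hcp : 0 ≤ cos α := cos_nonneg_of_neg_pi_div_two_le_of_le (by linarith [pi_pos]) (by linarith [pi_gt_three])
  have hd : 0 < α - α ^ 3 / 6 := by nlinarith [mul_pos h0 h0]
  rw [div_le_div_iff₀ hsp hd]
  calc _ ≤ cos α * sin α := by gcongr
    _ ≤ _ := by gcongr; linarith [hc.2]

lemma G_lower (B T s : ℕ) (hs : 0 < s) (α : ℝ) (h0 : 0 < α) (hα : α ≤ 1) (h1 : 5909 * α < π)
    (hB0 : 0 < B)
    (hB : (B : ℝ) ≤ s * ((1 - α ^ 2 / 2 - α ^ 4 * (5 / 96)) /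
      (α - α ^ 3 / 6 + α ^ 5 / 100) - 4))
    (h : lowLoop 5909 B (B + 8 * s) (17 * s ^ 2) T 5908 (B + 8 * s) (B + 8 * s) = true) (g : ℝ)
    (hg : s * (2 * g + 2 * (5909 * (5909 + 1))) ≤ T) : g ≤ G 5909 (2 * α) := by
  have hs' : (0 : ℝ) < s := by exact_mod_cast hs
  have hB1 : (B : ℝ) ≤ s * (ct α 1 - 8) := by
    refine hB.trans ?_
    refine mul_le_mul_of_nonneg_left ?_ hs'.le
    have := cot_lower α h0 hα
    unfold ct; push_cast; rw [one_mul]; linarith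
  have hY : ((B + 8 * s : ℕ) : ℝ) ≤ s * ct α 1 := by push_cast; linarith
  have := low_sound 5909 B T s hs α h0 (by exact_mod_cast h1) hB1 hB0 5908 1 _ _ le_rfl (by norm_num)
    hY (by simpa using hY) h
  rw [sum_ct] at this
  have := le_of_mul_le_mul_left (hg.trans this) hs'
  push_cast at this
  linarith

lemma G_upper (B T s : ℕ) (hs : 0 < s) (α : ℝ) (h0 : 0 < α) (hα : α ≤ 1) (h1 : 5909 * α < π)
    (hB0 : 0 < B)
    (hB : s * ((1 - α ^ 2 / 2 + α ^ 4 * (5 / 96)) / (α - α ^ 3 / 6) - 4) ≤ (B : ℝ))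
    (h : upLoop 5909 B (B + 8 * s) (17 * s ^ 2) T 5908 (B + 8 * s) (B + 8 * s) = true) (g : ℝ)
    (hg : T ≤ s * (2 * g + 2 * (5909 * (5909 + 1)))) : G 5909 (2 * α) ≤ g := by
  have hs' : (0 : ℝ) < s := by exact_mod_cast hs
  have hB1 : s * (ct α 1 - 8) ≤ (B : ℝ) := by
    refine le_trans ?_ hB
    refine mul_le_mul_of_nonneg_left ?_ hs'.le
    have := cot_upper α h0 hα
    unfold ct; push_cast; rw [one_mul]; linarith
  have hY : s * ct α 1 ≤ ((B + 8 * s : ℕ) : ℝ) := by push_cast; linarith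
  have := up_sound 5909 B T s hs α h0 (by exact_mod_cast h1) hB1 hB0 5908 1 _ _ le_rfl (by norm_num)
    hY (by simpa using hY) h
  rw [sum_ct] at this
  have := le_of_mul_le_mul_left (this.trans hg) hs'
  push_cast at this
  linarith

end Pf

namespace Pf
open Real

lemma G_cm : (13 : ℝ) ≤ G 5909 (841237 / 10 ^ 9) := by
  have h := G_lower 2373451160675740 69844406000000000000 1000000000000 (by norm_num) (4206185 / 10 ^ 10) (by norm_num) (by norm_num)
    (by linarith [pi_gt_three]) (by norm_num) (by norm_num) (by decide +kernel) (13) (by norm_num)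
  norm_num at h ⊢
  exact h

lemma G_cp : G 5909 (841238 / 10 ^ 9) ≤ (-13 : ℝ) := by
  have h := G_upper 2373448334541598 69844354000000000000 1000000000000 (by norm_num) (420619 / 10 ^ 9) (by norm_num) (by norm_num)
    (by linarith [pi_gt_three]) (by norm_num) (by norm_num) (by decide +kernel) (-13) (by norm_num)
  norm_num at h ⊢
  exact h

lemma G_p_low : (272669 : ℝ) ≤ G 5909 (8310 / 10 ^ 7) := by
  have h := G_lower 2402738730332723 70389718000000000000 1000000000000 (by norm_num) (4155 / 10 ^ 7) (by norm_num) (by norm_num)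
    (by linarith [pi_gt_three]) (by norm_num) (by norm_num) (by decide +kernel) (272669) (by norm_num)
  norm_num at h ⊢
  exact h

lemma G_p_up : G 5909 (8310 / 10 ^ 7) ≤ (272670 : ℝ) := by
  have h := G_upper 2402738730332732 70389720000000000000 1000000000000 (by norm_num) (4155 / 10 ^ 7) (by norm_num) (by norm_num)
    (by linarith [pi_gt_three]) (by norm_num) (by norm_num) (by decide +kernel) (272670) (by norm_num)
  norm_num at h ⊢
  exact h

lemma G_q : (-280573 : ℝ) ≤ G 5909 (8515 / 10 ^ 7) := by
  have h := G_lower 2344796100009337 69283234000000000000 1000000000000 (by norm_num) (42575 / 10 ^ 8) (by norm_num) (by norm_num)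
    (by linarith [pi_gt_three]) (by norm_num) (by norm_num) (by decide +kernel) (-280573) (by norm_num)
  norm_num at h ⊢
  exact h

end Pf

namespace Pf
open Real Set

lemma x_cot_le (x : ℝ) (h0 : 0 < x) (h1 : x < π) : x * (cos x / sin x) ≤ 1 := by
  have hs := sin_pos_of_pos_of_lt_pi h0 h1
  rw [mul_div_assoc', div_le_one hs]
  by_cases h : x < π / 2
  · have hc : 0 < cos x := cos_pos_of_mem_Ioo ⟨by linarith, h⟩
    have := (lt_tan h0 h).le
    rw [tan_eq_sin_div_cos, le_div_iff₀ hc] at this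
    exact this
  · have : cos x ≤ 0 := cos_nonpos_of_pi_div_two_le_of_le (by linarith) (by linarith)
    nlinarith

lemma csc_sq (x : ℝ) (h0 : 0 < x) (h1 : x < π) : 1 + (x - π / 2) ^ 2 ≤ 1 / sin x ^ 2 := by
  have key : ∀ y : ℝ, 0 ≤ y → y < π / 2 → 1 + y ^ 2 ≤ 1 / cos y ^ 2 := by
    intro y hy hy2
    have hc : 0 < cos y := cos_pos_of_mem_Ioo ⟨by linarith, hy2⟩
    have h := le_tan hy hy2
    have : 1 / cos y ^ 2 = 1 + tan y ^ 2 := by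
      rw [tan_eq_sin_div_cos]; field_simp; rw [add_comm]; exact (sin_sq_add_cos_sq y).symm
    rw [this]; gcongr
  by_cases h : x ≤ π / 2
  · have := key (π / 2 - x) (by linarith) (by linarith)
    rw [cos_pi_div_two_sub] at this
    convert this using 2; ring
  · have := key (x - π / 2) (by linarith) (by linarith)
    rw [cos_sub_pi_div_two] at this
    exact this

lemma hasDeriv_cot (x : ℝ) (hs : sin x ≠ 0) :
    HasDerivAt (fun x => cos x / sin x) (-(1 / sin x ^ 2)) x := by
  have h := (hasDerivAt_cos x).div (hasDerivAt_sin x) hs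
  refine HasDerivAt.congr_deriv (f := fun x => cos x / sin x) h ?_
  field_simp
  linear_combination -(sin_sq_add_cos_sq x)

lemma hasDeriv_csc2 (x : ℝ) (hs : sin x ≠ 0) :
    HasDerivAt (fun x => 1 / sin x ^ 2) (-(2 * (cos x / sin x) * (1 / sin x ^ 2))) x := by
  have h := (((hasDerivAt_sin x).pow 2).inv (pow_ne_zero 2 hs))
  have e : (fun x => 1 / sin x ^ 2) = (fun x => (sin ^ 2) x)⁻¹ := by
    funext x; simp
  rw [e]
  refine h.congr_deriv ?_
  simp only [Pi.pow_apply]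
  push_cast
  field_simp

lemma convex_cot (c : ℝ) (h0 : 0 ≤ c) (h1 : c ≤ π) :
    ConvexOn ℝ (Ioo 0 π) (fun x => (c - x) * (cos x / sin x)) := by
  have hsin : ∀ x ∈ Ioo 0 π, 0 < sin x := fun x hx => sin_pos_of_pos_of_lt_pi hx.1 hx.2
  have d1 : ∀ x ∈ Ioo 0 π, HasDerivAt (fun x => (c - x) * (cos x / sin x))
      ((-1) * (cos x / sin x) + (c - x) * (-(1 / sin x ^ 2))) x := by
    intro x hx
    exact ((hasDerivAt_id x).const_sub c).mul (hasDeriv_cot x (hsin x hx).ne')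
  refine convexOn_of_hasDerivWithinAt2_nonneg (convex_Ioo 0 π)
    (f' := fun x => (-1) * (cos x / sin x) + (c - x) * (-(1 / sin x ^ 2)))
    (f'' := fun x => 2 * (1 / sin x ^ 2) * (1 + (c - x) * (cos x / sin x)))
    (fun x hx => (d1 x hx).continuousAt.continuousWithinAt) ?_ ?_ ?_
  · intro x hx
    rw [interior_Ioo] at hx
    exact (d1 x hx).hasDerivWithinAt
  · intro x hx
    rw [interior_Ioo] at hx
    have hs := (hsin x hx).ne'
    have := ((hasDeriv_cot x hs).const_mul (-1)).add
      (((hasDerivAt_id x).const_sub c).mul (hasDeriv_csc2 x hs).neg)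
    refine HasDerivAt.hasDerivWithinAt ?_
    refine HasDerivAt.congr_deriv (f := fun x => (-1) * (cos x / sin x) + (c - x) * (-(1 / sin x ^ 2))) this ?_
    simp only [id, Pi.neg_apply]
    ring
  · intro x hx
    rw [interior_Ioo] at hx
    have hs := hsin x hx
    have : 0 ≤ 1 + (c - x) * (cos x / sin x) := by
      by_cases h : x ≤ π / 2
      · have hc : 0 ≤ cos x := cos_nonneg_of_neg_pi_div_two_le_of_le (by linarith [hx.1, pi_pos]) h
        have hh := x_cot_le x hx.1 hx.2
        have : 0 ≤ cos x / sin x := by positivity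
        nlinarith
      · have hh := x_cot_le (π - x) (by linarith [hx.2]) (by linarith [hx.1])
        rw [cos_pi_sub, sin_pi_sub] at hh
        have hc : cos x ≤ 0 := cos_nonpos_of_pi_div_two_le_of_le (by linarith) (by linarith [hx.2])
        have : cos x / sin x ≤ 0 := div_nonpos_of_nonpos_of_nonneg hc hs.le
        rw [neg_div] at hh
        nlinarith
    positivity

lemma concave_cot : ConcaveOn ℝ (Ioo 0 π) (fun x => x * (cos x / sin x)) := by
  have := (convex_cot 0 le_rfl pi_pos.le).neg
  refine this.congr (fun x _ => ?_)
  simp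

/-- domain of the main peak -/
abbrev I (n : ℕ) : Set ℝ := Ioo 0 (2 * π / n)

lemma mem_I (n : ℕ) (hn : 1 ≤ n) (θ : ℝ) (h : θ ∈ I n) (k : ℕ) (hk : k ∈ Finset.Icc 1 n) :
    (k / 2 : ℝ) * θ ∈ Ioo 0 π := by
  have hn' : (0 : ℝ) < n := by exact_mod_cast hn
  obtain ⟨h0, h1⟩ := h
  rw [Finset.mem_Icc] at hk
  have h2 : (1 : ℝ) ≤ k := by exact_mod_cast hk.1
  have h3 : (k : ℝ) ≤ n := by exact_mod_cast hk.2
  rw [lt_div_iff₀ hn'] at h1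
  exact ⟨by positivity, by nlinarith⟩

lemma G_eq (n : ℕ) (θ : ℝ) : G n θ = ∑ k ∈ Finset.Icc 1 n,
    (k / 2 : ℝ) * (cos ((k / 2 : ℝ) * θ) / sin ((k / 2 : ℝ) * θ)) := by
  unfold G
  refine Finset.sum_congr rfl (fun k _ => ?_)
  rw [show (k : ℝ) * θ / 2 = k / 2 * θ by ring]

lemma convexOn_sum' {s : Set ℝ} (hs : Convex ℝ s) (t : Finset ℕ) (f : ℕ → ℝ → ℝ)
    (h : ∀ k ∈ t, ConvexOn ℝ s (f k)) : ConvexOn ℝ s (fun x => ∑ k ∈ t, f k x) := by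
  induction t using Finset.induction_on with
  | empty => simpa using convexOn_const 0 hs
  | insert a t ha ih =>
    simp only [Finset.sum_insert ha]
    exact (h a (by simp)).add (ih (fun k hk => h k (by simp [hk])))

lemma convex_scale (n : ℕ) (hn : 1 ≤ n) (k : ℕ) (hk : k ∈ Finset.Icc 1 n) (f : ℝ → ℝ)
    (hf : ConvexOn ℝ (Ioo 0 π) f) : ConvexOn ℝ (I n) (fun θ => f ((k / 2 : ℝ) * θ)) := by
  have := hf.comp_linearMap (LinearMap.mulLeft ℝ (k / 2 : ℝ))
  exact this.subset (fun θ hθ => mem_I n hn θ hθ k hk) (convex_Ioo _ _)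

lemma Q_convex (n : ℕ) (hn : 1 ≤ n) : ConvexOn ℝ (I n) (fun θ => (2 * π / n - θ) * G n θ) := by
  have hn' : (0 : ℝ) < n := by exact_mod_cast hn
  have := convexOn_sum' (convex_Ioo 0 (2 * π / n)) (Finset.Icc 1 n) (fun k θ =>
    ((k * π / n) - (k / 2 : ℝ) * θ) * (cos ((k / 2 : ℝ) * θ) / sin ((k / 2 : ℝ) * θ))) (by
      intro k hk
      have h3 : (k : ℝ) ≤ n := by exact_mod_cast (Finset.mem_Icc.1 hk).2
      refine convex_scale n hn k hk (fun x => (k * π / n - x) * (cos x / sin x))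
        (convex_cot _ (by positivity) ?_)
      rw [div_le_iff₀ hn']; nlinarith [pi_pos])
  refine this.congr (fun θ _ => ?_)
  simp only [G_eq, Finset.mul_sum]
  refine Finset.sum_congr rfl (fun k _ => ?_)
  field_simp

lemma H_concave (n : ℕ) (hn : 1 ≤ n) : ConcaveOn ℝ (I n) (fun θ => θ * G n θ) := by
  have := (convexOn_sum' (convex_Ioo 0 (2 * π / n)) (Finset.Icc 1 n) (fun k θ =>
    (0 - (k / 2 : ℝ) * θ) * (cos ((k / 2 : ℝ) * θ) / sin ((k / 2 : ℝ) * θ))) (by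
      intro k hk
      exact convex_scale n hn k hk (fun x => (0 - x) * (cos x / sin x))
        (convex_cot _ le_rfl pi_pos.le))).neg
  refine this.congr (fun θ _ => ?_)
  simp only [G_eq, Finset.mul_sum, Pi.neg_apply, ← Finset.sum_neg_distrib]
  refine Finset.sum_congr rfl (fun k _ => ?_)
  ring

/-- derivative of G -/
noncomputable def G' (n : ℕ) (θ : ℝ) : ℝ :=
  -∑ k ∈ Finset.Icc 1 n, (k / 2 : ℝ) ^ 2 * (1 / sin ((k / 2 : ℝ) * θ) ^ 2)

lemma hasDeriv_G (n : ℕ) (hn : 1 ≤ n) (θ : ℝ) (h : θ ∈ I n) : HasDerivAt (G n) (G' n θ) θ := by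
  have : G n = fun θ => ∑ k ∈ Finset.Icc 1 n,
    (k / 2 : ℝ) * (cos ((k / 2 : ℝ) * θ) / sin ((k / 2 : ℝ) * θ)) := by funext θ; exact G_eq n θ
  rw [this, G', ← Finset.sum_neg_distrib]
  refine HasDerivAt.fun_sum (fun k hk => ?_)
  have hm := mem_I n hn θ h k hk
  have h1 := hasDeriv_cot _ (sin_pos_of_pos_of_lt_pi hm.1 hm.2).ne'
  have h2 := (h1.comp θ ((hasDerivAt_id θ).const_mul (k / 2 : ℝ))).const_mul (k / 2 : ℝ)
  refine HasDerivAt.congr_deriv (f := fun θ => (k / 2 : ℝ) * (cos ((k / 2 : ℝ) * θ) / sin ((k / 2 : ℝ) * θ))) h2 ?_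
  ring

lemma sum_pow2 (n : ℕ) : ∑ k ∈ Finset.Icc 1 n, (k : ℝ) ^ 2 = n * (n + 1) * (2 * n + 1) / 6 := by
  induction n with
  | zero => simp
  | succ n ih => rw [Finset.sum_Icc_succ_top (by omega), ih]; push_cast; ring

lemma sum_pow3 (n : ℕ) : ∑ k ∈ Finset.Icc 1 n, (k : ℝ) ^ 3 = n ^ 2 * (n + 1) ^ 2 / 4 := by
  induction n with
  | zero => simp
  | succ n ih => rw [Finset.sum_Icc_succ_top (by omega), ih]; push_cast; ring

lemma sum_pow4 (n : ℕ) : ∑ k ∈ Finset.Icc 1 n, (k : ℝ) ^ 4 =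
    n * (n + 1) * (2 * n + 1) * (3 * n ^ 2 + 3 * n - 1) / 30 := by
  induction n with
  | zero => simp
  | succ n ih => rw [Finset.sum_Icc_succ_top (by omega), ih]; push_cast; ring

lemma G'_le_sum (n : ℕ) (hn : 1 ≤ n) (θ : ℝ) (h : θ ∈ I n) :
    n * (n + 1) * (2 * n + 1) / 24 * (1 + π ^ 2 / 4) - π * θ * (n ^ 2 * (n + 1) ^ 2 / 32)
      + θ ^ 2 * (n * (n + 1) * (2 * n + 1) * (3 * n ^ 2 + 3 * n - 1) / 480) ≤ - G' n θ := by
  unfold G'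
  rw [neg_neg]
  have h1 : ∑ k ∈ Finset.Icc 1 n, (k / 2 : ℝ) ^ 2 * (1 + ((k / 2 : ℝ) * θ - π / 2) ^ 2) ≤
      ∑ k ∈ Finset.Icc 1 n, (k / 2 : ℝ) ^ 2 * (1 / sin ((k / 2 : ℝ) * θ) ^ 2) := by
    refine Finset.sum_le_sum (fun k hk => ?_)
    have hm := mem_I n hn θ h k hk
    exact mul_le_mul_of_nonneg_left (csc_sq _ hm.1 hm.2) (by positivity)
  refine le_trans (le_of_eq ?_) h1
  have e : ∀ k ∈ Finset.Icc 1 n, (k / 2 : ℝ) ^ 2 * (1 + ((k / 2 : ℝ) * θ - π / 2) ^ 2) =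
      (1 + π ^ 2 / 4) / 4 * (k : ℝ) ^ 2 - π * θ / 8 * (k : ℝ) ^ 3 + θ ^ 2 / 16 * (k : ℝ) ^ 4 := by
    intro k _; ring
  rw [Finset.sum_congr rfl e, Finset.sum_add_distrib, Finset.sum_sub_distrib, ← Finset.mul_sum,
    ← Finset.mul_sum, ← Finset.mul_sum, sum_pow2, sum_pow3, sum_pow4]
  ring

lemma G'_le (θ : ℝ) (h : θ ∈ I 5909) : G' 5909 θ ≤ - (195 * 10 ^ 8) := by
  have := G'_le_sum 5909 (by norm_num) θ h
  norm_num at this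
  have hp : (3.1415 : ℝ) < π := pi_gt_d4
  have h2 : (9.869 : ℝ) ≤ π ^ 2 := by nlinarith
  nlinarith [sq_nonneg (θ * (1441397187202571803 / 16) - π * (304889838599025 / 16))]

lemma hasDeriv_P (n : ℕ) (hn : 1 ≤ n) (θ : ℝ) (h : θ ∈ I n) :
    HasDerivAt (P n) (P n θ * G n θ) θ := by
  have key : ∀ m : ℕ, m ≤ n → HasDerivAt (P m) (P m θ * G m θ) θ := by
    intro m
    induction m with
    | zero =>
      intro _
      have : P 0 = fun _ => 1 := by funext x; simp [P]
      rw [this]; simpa [G] using hasDerivAt_const θ (1 : ℝ)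
    | succ m ih =>
      intro hm
      have hm' := mem_I n hn θ h (m + 1) (Finset.mem_Icc.2 ⟨by omega, hm⟩)
      have hs := sin_pos_of_pos_of_lt_pi hm'.1 hm'.2
      have e1 : P (m + 1) = fun θ => P m θ * (2 * sin (((m + 1 : ℕ) / 2 : ℝ) * θ)) := by
        funext x; unfold P; rw [Finset.prod_Icc_succ_top (by omega)]
        rw [show ((m + 1 : ℕ) : ℝ) * x / 2 = ((m + 1 : ℕ) : ℝ) / 2 * x by ring]
      have e2 : G (m + 1) θ = G m θ + ((m + 1 : ℕ) / 2 : ℝ) *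
          (cos (((m + 1 : ℕ) / 2 : ℝ) * θ) / sin (((m + 1 : ℕ) / 2 : ℝ) * θ)) := by
        rw [G_eq, G_eq, Finset.sum_Icc_succ_top (by omega)]
      rw [e2, e1]
      have h1 := ((hasDerivAt_sin _).comp θ
        ((hasDerivAt_id θ).const_mul ((m + 1 : ℕ) / 2 : ℝ))).const_mul 2
      have h2 := (ih (by omega)).mul h1
      refine HasDerivAt.congr_deriv (f := fun θ => P m θ * (2 * sin (((m + 1 : ℕ) / 2 : ℝ) * θ))) h2 ?_
      simp only [Function.comp, id]
      have hne := hs.ne'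
      generalize sin (((m + 1 : ℕ) : ℝ) / 2 * θ) = z at *
      field_simp
  exact key n le_rfl

lemma contDiff_P (n : ℕ) : ContDiff ℝ 1 (P n) := by
  unfold P
  exact contDiff_prod (fun k _ => by fun_prop)

lemma P_zero (n : ℕ) (hn : 1 ≤ n) : P n 0 = 0 := by
  unfold P
  exact Finset.prod_eq_zero (Finset.mem_Icc.2 ⟨le_rfl, hn⟩) (by simp)

lemma P_b (n : ℕ) (hn : 1 ≤ n) : P n (2 * π / n) = 0 := by
  have hn' : (0 : ℝ) < n := by exact_mod_cast hn
  unfold P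
  refine Finset.prod_eq_zero (Finset.mem_Icc.2 ⟨hn, le_rfl⟩) ?_
  rw [show (n : ℝ) * (2 * π / n) / 2 = π by field_simp]; simp

end Pf

namespace Pf
open Real Set

/-- Properties of the main peak. -/
structure Good (P G DP : ℝ → ℝ) (b x K K0 K2 r : ℝ) : Prop where
  hx : 0 < x
  hb : x < b
  hK : 0 < K
  hK0 : 0 < K0
  cP : Continuous P
  cD : Continuous DP
  der : ∀ θ, HasDerivAt P (DP θ) θ
  pos : ∀ θ ∈ Ioo 0 b, 0 < P θ
  z0 : P 0 = 0
  zb : P b = 0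
  eD : ∀ θ ∈ Ioo 0 b, DP θ = P θ * G θ
  tG : ∀ θ ∈ Ioo 0 b, (θ - x) * G θ ≤ - K * (θ - x) ^ 2
  hH : ∀ θ ∈ Ioo 0 b, θ * G θ ≤ - (x * K0) * (θ - x)
  hQ : ∀ θ ∈ Ioo 0 b, - ((b - x) * K0) * (θ - x) ≤ (b - θ) * G θ
  hr : 0 < r
  hr1 : 0 < x - r
  hr2 : x + r < b
  lo : ∀ θ ∈ Icc (x - r) (x + r), - K2 * (θ - x) ^ 2 ≤ (θ - x) * G θ

lemma exists_zero : ∃ x ∈ Ioo (841237 / 10 ^ 9 : ℝ) (841238 / 10 ^ 9), G 5909 x = 0 := by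
  have hc : ContinuousOn (G 5909) (Icc (841237 / 10 ^ 9 : ℝ) (841238 / 10 ^ 9)) := by
    intro θ hθ
    refine (hasDeriv_G 5909 (by norm_num) θ ⟨by linarith [hθ.1], ?_⟩).continuousAt.continuousWithinAt
    have : (841238 / 10 ^ 9 : ℝ) < 2 * π / (5909 : ℕ) := by
      rw [lt_div_iff₀ (by norm_num)]; norm_num; linarith [pi_gt_three]
    linarith [hθ.2]
  have := intermediate_value_Ioo' (by norm_num) hc
  exact this ⟨by linarith [G_cp], by linarith [G_cm]⟩

lemma G_anti (u v : ℝ) (hu : u ∈ I 5909) (hv : v ∈ I 5909) (h : u ≤ v) :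
    G 5909 v - G 5909 u ≤ - (195 * 10 ^ 8) * (v - u) := by
  have := (convex_Ioo 0 (2 * π / (5909 : ℕ))).image_sub_le_mul_sub_of_deriv_le
    (f := G 5909) (C := - (195 * 10 ^ 8))
    (fun θ hθ => (hasDeriv_G 5909 (by norm_num) θ hθ).continuousAt.continuousWithinAt)
    (fun θ hθ => by
      rw [interior_Ioo] at hθ
      exact (hasDeriv_G 5909 (by norm_num) θ hθ).differentiableAt.differentiableWithinAt)
    (fun θ hθ => by
      rw [interior_Ioo] at hθ
      rw [(hasDeriv_G 5909 (by norm_num) θ hθ).deriv]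
      exact G'_le θ hθ) u hu v hv h
  exact this

lemma concave_chord {S : Set ℝ} {f : ℝ → ℝ} (hf : ConcaveOn ℝ S f) {x y z : ℝ} (hx : x ∈ S)
    (hz : z ∈ S) (hxy : x ≤ y) (hyz : y ≤ z) (hxz : x < z) :
    (z - y) * f x + (y - x) * f z ≤ (z - x) * f y := by
  have h := hf.2 hx hz
    (show 0 ≤ (z - y) / (z - x) from div_nonneg (by linarith) (by linarith))
    (show 0 ≤ (y - x) / (z - x) from div_nonneg (by linarith) (by linarith))
    (by rw [← add_div, div_eq_one_iff_eq (by linarith)]; ring)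
  have hp : 0 < z - x := by linarith
  simp only [smul_eq_mul] at h
  rw [show (z - y) / (z - x) * x + (y - x) / (z - x) * z = y by field_simp; ring] at h
  calc _ = (z - x) * ((z - y) / (z - x) * f x + (y - x) / (z - x) * f z) := by field_simp
    _ ≤ _ := by gcongr

lemma concave_tangent {S : Set ℝ} {f : ℝ → ℝ} (hf : ConcaveOn ℝ S f) {x y d : ℝ} (hx : x ∈ S)
    (hy : y ∈ S) (hd : HasDerivAt f d x) : f y ≤ f x + d * (y - x) := by
  rcases lt_trichotomy x y with h | h | h
  · have := hf.slope_le_of_hasDerivAt hx hy h hd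
    rw [slope_def_field, div_le_iff₀ (by linarith)] at this
    linarith
  · subst h; simp
  · have := hf.le_slope_of_hasDerivAt hy hx h hd
    rw [slope_def_field, le_div_iff₀ (by linarith)] at this
    linarith

lemma good_exists : ∃ x ∈ Ioo (841237 / 10 ^ 9 : ℝ) (841238 / 10 ^ 9), ∃ K0 : ℝ, 26 * 10 ^ 9 ≤ K0 ∧
    Good (P 5909) (G 5909) (deriv (P 5909)) (2 * π / (5909 : ℕ)) x (195 * 10 ^ 8) K0 (28 * 10 ^ 9)
      (102 / 10 ^ 7) := by
  obtain ⟨x, ⟨hx1, hx2⟩, hG⟩ := exists_zero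
  have hb1 : (106332 / 10 ^ 8 : ℝ) < 2 * π / (5909 : ℕ) := by
    rw [lt_div_iff₀ (by norm_num)]; norm_num; linarith [pi_gt_d6]
  have hb2 : 2 * π / (5909 : ℕ) < (106333 / 10 ^ 8 : ℝ) := by
    rw [div_lt_iff₀ (by norm_num)]; norm_num; linarith [pi_lt_d6]
  have hxI : x ∈ I 5909 := ⟨by linarith, by linarith⟩
  have hpI : (8310 / 10 ^ 7 : ℝ) ∈ I 5909 := ⟨by norm_num, by linarith⟩
  have hqI : (8515 / 10 ^ 7 : ℝ) ∈ I 5909 := ⟨by norm_num, by linarith⟩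
  have hdG := hasDeriv_G 5909 (by norm_num) x hxI
  have hH := H_concave 5909 (by norm_num)
  have hQ := (Q_convex 5909 (by norm_num)).neg
  have dH : HasDerivAt (fun θ => θ * G 5909 θ) (x * G' 5909 x) x := by
    refine HasDerivAt.congr_deriv (f := fun θ => θ * G 5909 θ) ((hasDerivAt_id x).mul hdG) ?_
    simp [hG]
  set b := 2 * π / (5909 : ℕ) with hb
  have dQ : HasDerivAt (-fun θ => (b - θ) * G 5909 θ) (-((b - x) * G' 5909 x)) x := by
    refine HasDerivAt.congr_deriv (f := -fun θ => (b - θ) * G 5909 θ)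
      ((((hasDerivAt_id x).const_sub b).mul hdG)).neg ?_
    simp [hG]
  refine ⟨x, ⟨hx1, hx2⟩, - G' 5909 x, ?_, ?_⟩
  · have h1 := concave_tangent hH hxI hpI dH
    have h2 := G_p_low
    simp only [hG] at h1
    by_contra hc
    push Not at hc
    have e1 : x * (x - 8310 / 10 ^ 7) * (- G' 5909 x) ≤ x * (x - 8310 / 10 ^ 7) * (26 * 10 ^ 9) := by
      refine mul_le_mul_of_nonneg_left hc.le (mul_nonneg ?_ ?_) <;> linarith
    have e2 : x * (x - 8310 / 10 ^ 7) ≤ 841238 / 10 ^ 9 * (841238 / 10 ^ 9 - 8310 / 10 ^ 7) := by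
      gcongr; linarith
    nlinarith
  · refine ⟨by linarith, hxI.2, by norm_num, ?_, continuous_P _, ?_, ?_, ?_, P_zero _ (by norm_num),
      P_b _ (by norm_num), ?_, ?_, ?_, ?_, by norm_num, by linarith, by linarith, ?_⟩
    · linarith [G'_le x hxI]
    · exact (contDiff_P 5909).continuous_deriv le_rfl
    · intro θ
      exact ((contDiff_P 5909).differentiable one_ne_zero θ).hasDerivAt
    · intro θ hθ
      refine P_pos 5909 θ hθ.1 ?_
      have := hθ.2
      rw [hb, lt_div_iff₀ (by norm_num)] at this
      linarith
    · intro θ hθ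
      exact (hasDeriv_P 5909 (by norm_num) θ hθ).deriv
    · intro θ hθ
      rcases le_total x θ with h | h
      · have := G_anti x θ hxI hθ h
        rw [hG] at this
        nlinarith
      · have := G_anti θ x hθ hxI h
        rw [hG] at this
        nlinarith
    · intro θ hθ
      have := concave_tangent hH hxI hθ dH
      simp only [hG] at this
      linarith
    · intro θ hθ
      have := concave_tangent hQ hxI hθ dQ
      simp only [Pi.neg_apply, hG] at this
      linarith
    · intro θ hθ
      rcases le_total x θ with h | h
      · have h1 := concave_chord hH hxI hqI h (by linarith [hθ.2]) (by linarith)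
        simp only [hG] at h1
        have h2 := G_q
        have h3 : -(28 * 10 ^ 9) * (θ - x) ≤ G 5909 θ := by
          by_contra hc
          push Not at hc
          have e1 : (θ - x) * (8515 / 10 ^ 7 * -280573) ≤ (8515 / 10 ^ 7 - x) * (θ * G 5909 θ) := by
            nlinarith
          have e2 : (8515 / 10 ^ 7 - x) * (θ * G 5909 θ) <
            (8515 / 10 ^ 7 - x) * (θ * (-(28 * 10 ^ 9) * (θ - x))) := by
            have : 0 < θ := by linarith
            have : 0 < 8515 / 10 ^ 7 - x := by linarith
            gcongr
          have e3 : (8515 / 10 ^ 7 - x) * (θ * (-(28 * 10 ^ 9) * (θ - x))) ≤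
              (8515 / 10 ^ 7 - 841238 / 10 ^ 9) * ((841237 / 10 ^ 9) * (-(28 * 10 ^ 9) * (θ - x))) := by
            have : (8515 / 10 ^ 7 - 841238 / 10 ^ 9) * (841237 / 10 ^ 9) ≤ (8515 / 10 ^ 7 - x) * θ := by
              gcongr <;> linarith
            nlinarith
          nlinarith
        nlinarith
      · have h1 := concave_chord hQ hpI hxI (by linarith [hθ.1]) h (by linarith)
        simp only [Pi.neg_apply, hG] at h1
        have h2 := G_p_up
        have h3 : G 5909 θ ≤ (28 * 10 ^ 9) * (x - θ) := by
          by_contra hc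
          push Not at hc
          have e1 : (x - 8310 / 10 ^ 7) * ((b - θ) * G 5909 θ) ≤
            (x - θ) * ((106333 / 10 ^ 8 - 8310 / 10 ^ 7) * 272670) := by
            have : (b - 8310 / 10 ^ 7) * G 5909 (8310 / 10 ^ 7) ≤
              (106333 / 10 ^ 8 - 8310 / 10 ^ 7) * 272670 := by
              have := G_p_low
              gcongr
            have := mul_le_mul_of_nonneg_left this (sub_nonneg.2 h)
            linarith
          have e2 : (x - 8310 / 10 ^ 7) * ((b - θ) * (28 * 10 ^ 9 * (x - θ))) <
            (x - 8310 / 10 ^ 7) * ((b - θ) * G 5909 θ) := by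
            have : 0 < b - θ := by linarith
            have : 0 < x - 8310 / 10 ^ 7 := by linarith
            gcongr
          have e3 : (841237 / 10 ^ 9 - 8310 / 10 ^ 7) * ((106332 / 10 ^ 8 - 841238 / 10 ^ 9) *
              (28 * 10 ^ 9 * (x - θ))) ≤ (x - 8310 / 10 ^ 7) * ((b - θ) * (28 * 10 ^ 9 * (x - θ))) := by
            have : (841237 / 10 ^ 9 - 8310 / 10 ^ 7) * (106332 / 10 ^ 8 - 841238 / 10 ^ 9) ≤
              (x - 8310 / 10 ^ 7) * (b - θ) := by
              gcongr
              · linarith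
              · linarith
            nlinarith
          nlinarith
        nlinarith

end Pf

namespace Pf
open Real Set

lemma imono {b : ℝ} (hb : 0 ≤ b) {f g : ℝ → ℝ} (hf : Continuous f) (hg : Continuous g)
    (h : ∀ θ ∈ Ioo 0 b, f θ ≤ g θ) : ∫ θ in (0:ℝ)..b, f θ ≤ ∫ θ in (0:ℝ)..b, g θ :=
  intervalIntegral.integral_mono_on_of_le_Ioo hb (hf.intervalIntegrable _ _)
    (hg.intervalIntegrable _ _) h

lemma peak_le {S : Set ℝ} (hS : Convex ℝ S) {f f' : ℝ → ℝ} {x : ℝ} (hx : x ∈ S)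
    (hd : ∀ θ ∈ S, HasDerivAt f (f' θ) θ) (hs : ∀ θ ∈ S, (θ - x) * f' θ ≤ 0) :
    ∀ θ ∈ S, f θ ≤ f x := by
  intro θ hθ
  rcases le_total x θ with h | h
  · have hsub : Icc x θ ⊆ S := hS.ordConnected.out hx hθ
    refine antitoneOn_of_deriv_nonpos (convex_Icc x θ)
      (fun y hy => (hd y (hsub hy)).continuousAt.continuousWithinAt)
      (fun y hy => (hd y (hsub (interior_subset hy))).differentiableAt.differentiableWithinAt)
      (fun y hy => ?_) ⟨le_rfl, h⟩ ⟨h, le_rfl⟩ h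
    have hy' := hsub (interior_subset hy)
    rw [interior_Icc] at hy
    rw [(hd y hy').deriv]
    have := hs y hy'
    by_contra hc
    push Not at hc
    nlinarith [mul_pos (sub_pos.2 hy.1) hc]
  · have hsub : Icc θ x ⊆ S := hS.ordConnected.out hθ hx
    refine monotoneOn_of_deriv_nonneg (convex_Icc θ x)
      (fun y hy => (hd y (hsub hy)).continuousAt.continuousWithinAt)
      (fun y hy => (hd y (hsub (interior_subset hy))).differentiableAt.differentiableWithinAt)
      (fun y hy => ?_) ⟨le_rfl, h⟩ ⟨h, le_rfl⟩ h
    have hy' := hsub (interior_subset hy)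
    rw [interior_Icc] at hy
    rw [(hd y hy').deriv]
    have := hs y hy'
    by_contra hc
    push Not at hc
    nlinarith [mul_pos (sub_pos.2 hy.2) (neg_pos.2 hc)]

section
variable {P G DP : ℝ → ℝ} {b x K K0 K2 r : ℝ}

lemma Good.b_pos (h : Good P G DP b x K K0 K2 r) : 0 < b := h.hx.trans h.hb

lemma Good.P0_pos (h : Good P G DP b x K K0 K2 r) : 0 < P x := h.pos x ⟨h.hx, h.hb⟩

lemma Good.ibp (h : Good P G DP b x K K0 K2 r) (g g' : ℝ → ℝ) (hg : ∀ θ, HasDerivAt g (g' θ) θ)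
    (hg' : Continuous g') : ∫ θ in (0:ℝ)..b, (g' θ * P θ + g θ * DP θ) = 0 := by
  have hgc : Continuous g := continuous_iff_continuousAt.2 (fun θ => (hg θ).continuousAt)
  have := intervalIntegral.integral_eq_sub_of_hasDerivAt (a := 0) (b := b)
    (f := fun θ => g θ * P θ) (f' := fun θ => g' θ * P θ + g θ * DP θ)
    (fun θ _ => (hg θ).mul (h.der θ))
    (Continuous.intervalIntegrable (by have := h.cP; have := h.cD; fun_prop) _ _)
  rw [this, h.z0, h.zb]; simp

lemma hasDeriv_gauss (K x θ : ℝ) : HasDerivAt (fun θ => exp (K * (θ - x) ^ 2 / 2))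
    (exp (K * (θ - x) ^ 2 / 2) * (K * (θ - x))) θ := by
  have h1 : HasDerivAt (fun θ => K * (θ - x) ^ 2 / 2) (K * (θ - x)) θ := by
    have := ((((hasDerivAt_id θ).sub_const x).pow 2).const_mul K).div_const 2
    refine HasDerivAt.congr_deriv (f := fun θ => K * (θ - x) ^ 2 / 2) this ?_
    simp; ring
  exact h1.exp

lemma Good.upper (h : Good P G DP b x K K0 K2 r) (θ : ℝ) (hθ : θ ∈ Ioo 0 b) :
    P θ ≤ P x * exp (-(K * (θ - x) ^ 2 / 2)) := by
  have := peak_le (convex_Ioo 0 b) (x := x) ⟨h.hx, h.hb⟩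
    (fun θ _ => (h.der θ).mul (hasDeriv_gauss K x θ)) (fun θ hθ => ?_) θ hθ
  · simp only [Pi.mul_apply, sub_self, ne_eq, OfNat.ofNat_ne_zero, not_false_eq_true, zero_pow, mul_zero, zero_div,
      exp_zero, mul_one] at this
    rw [exp_neg, ← div_eq_mul_inv, le_div_iff₀ (exp_pos _)]
    exact this
  · rw [h.eD θ hθ]
    have h1 := h.tG θ hθ
    have h2 := h.pos θ hθ
    have : (θ - x) * (P θ * G θ * exp (K * (θ - x) ^ 2 / 2) +
        P θ * (exp (K * (θ - x) ^ 2 / 2) * (K * (θ - x)))) =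
        (P θ * exp (K * (θ - x) ^ 2 / 2)) * ((θ - x) * G θ + K * (θ - x) ^ 2) := by ring
    rw [this]
    exact mul_nonpos_of_nonneg_of_nonpos (by positivity) (by linarith)

lemma Good.mem_r (h : Good P G DP b x K K0 K2 r) (θ : ℝ) (hθ : θ ∈ Icc (x - r) (x + r)) :
    θ ∈ Ioo 0 b := ⟨by linarith [hθ.1, h.hr1], by linarith [hθ.2, h.hr2]⟩

lemma Good.lower (h : Good P G DP b x K K0 K2 r) (hK2 : 0 ≤ K2) (θ : ℝ) (hθ : θ ∈ Icc (x - r) (x + r)) :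
    P x * exp (-(K2 * r ^ 2 / 2)) ≤ P θ := by
  have hr := h.hr
  have h0 := peak_le (convex_Icc (x - r) (x + r)) (x := x) ⟨by linarith, by linarith⟩
    (fun θ _ => ((h.der θ).mul (hasDeriv_gauss K2 x θ)).neg) (fun θ hθ => ?_) θ hθ
  · simp only [Pi.neg_apply, Pi.mul_apply, sub_self, ne_eq, OfNat.ofNat_ne_zero, not_false_eq_true, zero_pow, mul_zero, zero_div,
      exp_zero, mul_one] at h0
    have h1 : P x ≤ P θ * exp (K2 * (θ - x) ^ 2 / 2) := by linarith
    have h2 : exp (K2 * (θ - x) ^ 2 / 2) ≤ exp (K2 * r ^ 2 / 2) := by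
      have : (θ - x) ^ 2 ≤ r ^ 2 := by
        refine sq_le_sq' ?_ ?_ <;> linarith [hθ.1, hθ.2]
      gcongr
    rw [exp_neg, ← div_eq_mul_inv, div_le_iff₀ (exp_pos _)]
    refine h1.trans ?_
    have := h.pos θ (h.mem_r θ hθ)
    gcongr
  · rw [h.eD θ (h.mem_r θ hθ)]
    have h1 := h.lo θ hθ
    have h2 := h.pos θ (h.mem_r θ hθ)
    have : (θ - x) * -(P θ * G θ * exp (K2 * (θ - x) ^ 2 / 2) +
        P θ * (exp (K2 * (θ - x) ^ 2 / 2) * (K2 * (θ - x)))) =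
        (P θ * exp (K2 * (θ - x) ^ 2 / 2)) * -((θ - x) * G θ + K2 * (θ - x) ^ 2) := by ring
    rw [this]
    exact mul_nonpos_of_nonneg_of_nonpos (by positivity) (by linarith)

lemma Good.low_int (h : Good P G DP b x K K0 K2 r) (hK2 : 0 ≤ K2) (φ : ℝ → ℝ) (hφ : Continuous φ)
    (hp : ∀ θ, 0 ≤ φ θ) :
    P x * exp (-(K2 * r ^ 2 / 2)) * ∫ θ in (x - r)..(x + r), φ θ ≤ ∫ θ in (0:ℝ)..b, P θ * φ θ := by
  have hr := h.hr
  have hr1 := h.hr1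
  have hr2 := h.hr2
  have hb := h.b_pos
  have hc : Continuous (fun θ => P θ * φ θ) := h.cP.mul hφ
  have s1 : ∫ θ in (x - r)..(x + r), P θ * φ θ ≤ ∫ θ in (0:ℝ)..b, P θ * φ θ := by
    refine intervalIntegral.integral_mono_interval (by linarith) (by linarith) (by linarith) ?_
      (hc.intervalIntegrable _ _)
    rw [Filter.EventuallyLE, MeasureTheory.ae_restrict_iff' measurableSet_Ioc]
    refine Filter.Eventually.of_forall (fun θ hθ => ?_)
    have : 0 ≤ P θ := by
      rcases hθ.2.lt_or_eq with h1 | h1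
      · exact (h.pos θ ⟨hθ.1, h1⟩).le
      · rw [h1, h.zb]
    exact mul_nonneg this (hp θ)
  refine le_trans ?_ s1
  rw [← intervalIntegral.integral_const_mul]
  refine intervalIntegral.integral_mono_on (by linarith)
    ((hφ.const_mul _).intervalIntegrable _ _) (hc.intervalIntegrable _ _) (fun θ hθ => ?_)
  exact mul_le_mul_of_nonneg_right (h.lower hK2 θ hθ) (hp θ)

lemma Good.Z_lower (h : Good P G DP b x K K0 K2 r) (hK2 : 0 ≤ K2) :
    P x * exp (-(K2 * r ^ 2 / 2)) * (2 * r) ≤ ∫ θ in (0:ℝ)..b, P θ := by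
  have := h.low_int hK2 (fun _ => 1) continuous_const (fun _ => zero_le_one)
  simp only [mul_one, intervalIntegral.integral_const, smul_eq_mul] at this
  convert this using 2
  ring

lemma Good.Z_upper (h : Good P G DP b x K K0 K2 r) :
    ∫ θ in (0:ℝ)..b, P θ ≤ P x * √(2 * π / K) := by
  have hK := h.hK
  have hb := h.b_pos
  have hc : Continuous (fun θ => P x * exp (-(K * (θ - x) ^ 2 / 2))) := by fun_prop
  refine (imono hb.le h.cP hc h.upper).trans ?_
  rw [intervalIntegral.integral_const_mul]
  refine mul_le_mul_of_nonneg_left ?_ h.P0_pos.le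
  have hi : MeasureTheory.Integrable (fun θ : ℝ => exp (-(K / 2) * θ ^ 2)) :=
    integrable_exp_neg_mul_sq (by positivity)
  have hg := integral_gaussian (K / 2)
  have e1 : ∫ θ in (0:ℝ)..b, exp (-(K * (θ - x) ^ 2 / 2)) =
      ∫ θ in (0 - x)..(b - x), exp (-(K / 2) * θ ^ 2) := by
    rw [← intervalIntegral.integral_comp_sub_right (fun θ => exp (-(K / 2) * θ ^ 2)) x]
    congr 1; funext θ; congr 1; ring
  rw [e1, intervalIntegral.integral_of_le (by linarith)]
  refine (MeasureTheory.setIntegral_le_integral hi (Filter.Eventually.of_forall fun θ => (exp_pos _).le)).trans ?_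
  rw [hg]
  refine le_of_eq ?_
  congr 1; field_simp

lemma Good.m2 (h : Good P G DP b x K K0 K2 r) :
    K * ∫ θ in (0:ℝ)..b, P θ * (θ - x) ^ 2 ≤ ∫ θ in (0:ℝ)..b, P θ := by
  have cP := h.cP
  have cD := h.cD
  have e := h.ibp (fun θ => θ - x) (fun _ => 1) (fun θ => (hasDerivAt_id θ).sub_const x) continuous_const
  have := imono h.b_pos.le (f := fun θ => (1 * P θ + (θ - x) * DP θ))
    (g := fun θ => P θ - K * (P θ * (θ - x) ^ 2)) (by fun_prop) (by fun_prop) (fun θ hθ => by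
      rw [h.eD θ hθ]
      have h1 := mul_le_mul_of_nonneg_left (h.tG θ hθ) (h.pos θ hθ).le
      linarith)
  rw [e, intervalIntegral.integral_sub (Continuous.intervalIntegrable (by fun_prop) _ _)
    (Continuous.intervalIntegrable (by fun_prop) _ _), intervalIntegral.integral_const_mul] at this
  linarith

lemma Good.m4 (h : Good P G DP b x K K0 K2 r) :
    K * ∫ θ in (0:ℝ)..b, P θ * (θ - x) ^ 4 ≤ 3 * ∫ θ in (0:ℝ)..b, P θ * (θ - x) ^ 2 := by
  have cP := h.cP
  have cD := h.cD
  have e := h.ibp (fun θ => (θ - x) ^ 3) (fun θ => 3 * (θ - x) ^ 2) (fun θ => by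
    have := ((hasDerivAt_id θ).sub_const x).pow 3
    refine HasDerivAt.congr_deriv (f := fun θ => (θ - x) ^ 3) this ?_
    simp) (by fun_prop)
  have := imono h.b_pos.le (f := fun θ => (3 * (θ - x) ^ 2 * P θ + (θ - x) ^ 3 * DP θ))
    (g := fun θ => 3 * (P θ * (θ - x) ^ 2) - K * (P θ * (θ - x) ^ 4)) (by fun_prop) (by fun_prop) (fun θ hθ => by
      rw [h.eD θ hθ]
      have h1 := mul_le_mul_of_nonneg_left (h.tG θ hθ)
        (mul_nonneg (h.pos θ hθ).le (sq_nonneg (θ - x)))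
      linarith)
  rw [e, intervalIntegral.integral_sub (Continuous.intervalIntegrable (by fun_prop) _ _)
    (Continuous.intervalIntegrable (by fun_prop) _ _), intervalIntegral.integral_const_mul,
    intervalIntegral.integral_const_mul] at this
  linarith

lemma hasDeriv_sin_half (θ : ℝ) : HasDerivAt (fun θ => sin (θ / 2)) (cos (θ / 2) / 2) θ := by
  have := (hasDerivAt_sin (θ / 2)).comp θ ((hasDerivAt_id θ).div_const 2)
  refine HasDerivAt.congr_deriv (f := fun θ => sin (θ / 2)) this ?_
  ring

lemma Good.T_upper (h : Good P G DP b x K K0 K2 r) (hb2 : b ≤ π) :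
    x * K0 * ∫ θ in (0:ℝ)..b, P θ * sin (θ / 2) * (θ - x) ≤ 2 * ∫ θ in (0:ℝ)..b, P θ * sin (θ / 2) := by
  have cP := h.cP
  have cD := h.cD
  have e := h.ibp (fun θ => θ * sin (θ / 2)) (fun θ => 1 * sin (θ / 2) + θ * (cos (θ / 2) / 2))
    (fun θ => (hasDerivAt_id θ).mul (hasDeriv_sin_half θ)) (by fun_prop)
  have := imono h.b_pos.le (f := fun θ => ((1 * sin (θ / 2) + θ * (cos (θ / 2) / 2)) * P θ + θ * sin (θ / 2) * DP θ))
    (g := fun θ => 2 * (P θ * sin (θ / 2)) - x * K0 * (P θ * sin (θ / 2) * (θ - x))) (by fun_prop) (by fun_prop) (fun θ hθ => by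
      rw [h.eD θ hθ]
      have hs : 0 < sin (θ / 2) := sin_pos_of_pos_of_lt_pi (by linarith [hθ.1]) (by linarith [hθ.2, pi_pos])
      have h1 := mul_le_mul_of_nonneg_left (h.hH θ hθ)
        (mul_nonneg (h.pos θ hθ).le hs.le)
      have h2 := x_cot_le (θ / 2) (by linarith [hθ.1]) (by linarith [hθ.2, pi_pos])
      rw [mul_div_assoc', div_le_one hs] at h2
      have h3 := mul_le_mul_of_nonneg_left h2 (h.pos θ hθ).le
      linarith)
  rw [e, intervalIntegral.integral_sub (Continuous.intervalIntegrable (by fun_prop) _ _)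
    (Continuous.intervalIntegrable (by fun_prop) _ _), intervalIntegral.integral_const_mul,
    intervalIntegral.integral_const_mul] at this
  linarith

lemma Good.T_lower (h : Good P G DP b x K K0 K2 r) (hb2 : b ≤ π) :
    - ∫ θ in (0:ℝ)..b, P θ * sin (θ / 2) ≤ (b - x) * K0 * ∫ θ in (0:ℝ)..b, P θ * sin (θ / 2) * (θ - x) := by
  have cP := h.cP
  have cD := h.cD
  have e := h.ibp (fun θ => (b - θ) * sin (θ / 2)) (fun θ => (-1) * sin (θ / 2) + (b - θ) * (cos (θ / 2) / 2))
    (fun θ => ((hasDerivAt_id θ).const_sub b).mul (hasDeriv_sin_half θ)) (by fun_prop)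
  have := imono h.b_pos.le (g := fun θ => (((-1) * sin (θ / 2) + (b - θ) * (cos (θ / 2) / 2)) * P θ + (b - θ) * sin (θ / 2) * DP θ))
    (f := fun θ => (-1) * (P θ * sin (θ / 2)) - (b - x) * K0 * (P θ * sin (θ / 2) * (θ - x))) (by fun_prop) (by fun_prop) (fun θ hθ => by
      rw [h.eD θ hθ]
      have hs : 0 < sin (θ / 2) := sin_pos_of_pos_of_lt_pi (by linarith [hθ.1]) (by linarith [hθ.2, pi_pos])
      have hc : 0 ≤ cos (θ / 2) := cos_nonneg_of_neg_pi_div_two_le_of_le (by linarith [hθ.1, pi_pos]) (by linarith [hθ.2, pi_pos])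
      have h1 := mul_le_mul_of_nonneg_left (h.hQ θ hθ)
        (mul_nonneg (h.pos θ hθ).le hs.le)
      have h3 : 0 ≤ (b - θ) * cos (θ / 2) * P θ := mul_nonneg (mul_nonneg (by linarith [hθ.2]) hc) (h.pos θ hθ).le
      linarith)
  rw [e, intervalIntegral.integral_sub (Continuous.intervalIntegrable (by fun_prop) _ _)
    (Continuous.intervalIntegrable (by fun_prop) _ _), intervalIntegral.integral_const_mul,
    intervalIntegral.integral_const_mul] at this
  linarith

end
end Pf

namespace Pf
open Real Set

lemma abs_sin_sub (y : ℝ) : |sin y - y| ≤ (9 / 200 * y ^ 2 + y ^ 4 / (9 / 200)) / 12 := by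
  have key : ∀ y : ℝ, 0 ≤ y → |sin y - y| ≤ y ^ 3 / 6 := by
    intro y hy
    rcases hy.lt_or_eq with h | h
    · have h1 := sin_gt_sub_cube h
      have h2 := sin_lt h
      rw [abs_le]; constructor <;> nlinarith [pow_pos h 3]
    · rw [← h]; simp
  have h2 : |sin y - y| ≤ |y| ^ 3 / 6 := by
    rcases le_total 0 y with h | h
    · rw [abs_of_nonneg h]; exact key y h
    · have := key (-y) (by linarith)
      rw [sin_neg, ← abs_neg] at this
      rw [abs_of_nonpos h]
      convert this using 2
      ring
  refine h2.trans ?_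
  have h3 : y ^ 2 = |y| ^ 2 := (sq_abs y).symm
  have h4 : y ^ 4 = |y| ^ 4 := by rw [show y ^ 4 = (y ^ 2) ^ 2 by ring, h3]; ring
  rw [h3, h4]
  nlinarith [sq_nonneg (|y| * (9 / 200 - |y|))]

lemma cubic_bound (e M t : ℝ) (he : |e| ≤ 7 / 10 ^ 4) (hM : 0 ≤ M) (hM2 : M ≤ 1868) :
    |sin (e - M * t) - (e - M * t)| ≤
      (9 / 200 * (1 / 10 ^ 6 + 6978848 * t ^ 2) +
        (2 / 10 ^ 12 + 8 * 1868 ^ 4 * t ^ 4) / (9 / 200)) / 12 := by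
  refine (abs_sin_sub _).trans ?_
  have he2 : e ^ 2 ≤ 49 / 10 ^ 8 := by
    rw [← sq_abs e]; nlinarith [abs_nonneg e]
  have hM3 : (M * t) ^ 2 ≤ 3489424 * t ^ 2 := by
    rw [mul_pow]
    have : M ^ 2 ≤ 3489424 := by nlinarith
    exact mul_le_mul_of_nonneg_right this (sq_nonneg t)
  have h1 : (e - M * t) ^ 2 ≤ 2 * e ^ 2 + 2 * (M * t) ^ 2 := by nlinarith [sq_nonneg (e + M * t)]
  have h2 : (e - M * t) ^ 4 ≤ 8 * (e ^ 2) ^ 2 + 8 * ((M * t) ^ 2) ^ 2 := by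
    rw [show (e - M * t) ^ 4 = ((e - M * t) ^ 2) ^ 2 by ring]
    nlinarith [sq_nonneg (e - M * t), sq_nonneg (e ^ 2 - (M * t) ^ 2)]
  have h3 : (e ^ 2) ^ 2 ≤ (49 / 10 ^ 8) ^ 2 := by gcongr
  have h4 : ((M * t) ^ 2) ^ 2 ≤ (3489424 * t ^ 2) ^ 2 := by gcongr
  nlinarith

lemma sin_ratio (s : ℝ) (h : 53 / 1000 ≤ s) : |sin s| ≤ s * (1 - 46 / 10 ^ 5) := by
  have key : ∀ s : ℝ, 53 / 1000 ≤ s → s ≤ 1 → sin s ≤ s * (1 - 46 / 10 ^ 5) := by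
    intro s h1 h2
    have hs := (abs_le.1 (Real.sin_bound (x := s) (by rw [abs_of_pos (by linarith)]; exact h2))).2
    rw [abs_of_pos (by linarith)] at hs
    have h3 : 46 / 10 ^ 5 ≤ s ^ 2 / 6 - s ^ 4 / 100 := by nlinarith [mul_nonneg (by nlinarith : 0 ≤ s ^ 2 - 28 / 10 ^ 4) (by nlinarith : 0 ≤ 1 - s ^ 2)]
    nlinarith
  rcases le_total s 2 with h2 | h2
  · have hp : 0 ≤ sin s := sin_nonneg_of_nonneg_of_le_pi (by linarith) (by linarith [pi_gt_three])
    rw [abs_of_nonneg hp]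
    rcases le_total s 1 with h1 | h1
    · exact key s h h1
    · have h3 := key (s / 2) (by linarith) (by linarith)
      have h4 : sin s = 2 * sin (s / 2) * cos (s / 2) := by rw [← sin_two_mul]; congr 1; ring
      have h5 : 0 ≤ sin (s / 2) := sin_nonneg_of_nonneg_of_le_pi (by linarith) (by linarith [pi_gt_three])
      have h6 := cos_le_one (s / 2)
      nlinarith
  · have := abs_sin_le_one s
    linarith

lemma exp_32 : (223 / 1000 : ℝ) ≤ exp (-(3 / 2)) := by
  have h := exp_one_lt_d9
  have h1 : exp (3 / 2) ^ 2 = exp 1 ^ 3 := by rw [← exp_nat_mul, ← exp_nat_mul]; norm_num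
  have h2 : exp 1 ^ 3 ≤ 2.7182818286 ^ 3 := by gcongr
  have h3 : exp (3 / 2) ≤ 1000 / 223 := by
    refine le_of_sq_le_sq ?_ (by norm_num)
    rw [h1]; refine h2.trans (by norm_num)
  rw [exp_neg, le_inv_comm₀ (by norm_num) (exp_pos _)]
  refine h3.trans (by norm_num)

section
variable {P G DP : ℝ → ℝ} {b x K0 : ℝ}

/-- numerical hypotheses -/
structure Num (P G DP : ℝ → ℝ) (b x K0 : ℝ) : Prop where
  g : Good P G DP b x (195 * 10 ^ 8) K0 (28 * 10 ^ 9) (102 / 10 ^ 7)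
  x1 : 841237 / 10 ^ 9 < x
  x2 : x < 841238 / 10 ^ 9
  k : 26 * 10 ^ 9 ≤ K0
  b1 : 106332 / 10 ^ 8 < b
  b2 : b < 106333 / 10 ^ 8

lemma Num.Zlow (h : Num P G DP b x K0) : 45 / 10 ^ 7 * P x ≤ ∫ θ in (0:ℝ)..b, P θ := by
  have h1 := h.g.Z_lower (by norm_num)
  have h2 : exp (-(3 / 2)) ≤ exp (-(28 * 10 ^ 9 * (102 / 10 ^ 7 : ℝ) ^ 2 / 2)) := by
    refine exp_le_exp.2 (by norm_num)
  have h3 := exp_32.trans h2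
  have := mul_le_mul_of_nonneg_left h3 h.g.P0_pos.le
  have hp := h.g.P0_pos
  generalize exp (-(28 * 10 ^ 9 * (102 / 10 ^ 7 : ℝ) ^ 2 / 2)) = E at *
  linarith

lemma Num.Zup (h : Num P G DP b x K0) : ∫ θ in (0:ℝ)..b, P θ ≤ 18 / 10 ^ 6 * P x := by
  refine h.g.Z_upper.trans ?_
  rw [mul_comm]
  refine mul_le_mul_of_nonneg_right ?_ h.g.P0_pos.le
  refine sqrt_le_iff.2 ⟨by norm_num, ?_⟩
  rw [div_le_iff₀ (by norm_num)]
  norm_num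
  linarith [pi_lt_d2]

lemma Num.Zpos (h : Num P G DP b x K0) : 0 < ∫ θ in (0:ℝ)..b, P θ :=
  lt_of_lt_of_le (mul_pos (by norm_num) h.g.P0_pos) h.Zlow

lemma Num.sin_pos (h : Num P G DP b x K0) (θ : ℝ) (hθ : θ ∈ Ioo 0 b) : 0 < sin (θ / 2) :=
  sin_pos_of_pos_of_lt_pi (by linarith [hθ.1]) (by linarith [hθ.2, h.b2, pi_gt_three])

lemma Num.S_lower (h : Num P G DP b x K0) :
    41 / 10 ^ 5 * ∫ θ in (0:ℝ)..b, P θ ≤ ∫ θ in (0:ℝ)..b, P θ * sin (θ / 2) := by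
  have cP := h.g.cP
  have := imono h.g.b_pos.le (f := fun θ => 415 / 10 ^ 6 * P θ - 36000 * (P θ * (θ - x) ^ 2))
    (g := fun θ => P θ * sin (θ / 2)) (by fun_prop) (by fun_prop) (fun θ hθ => by
      have h1 : 415 / 10 ^ 6 - 36000 * (θ - x) ^ 2 ≤ sin (θ / 2) := by
        have h2 := sin_gt_sub_cube (x := θ / 2) (by linarith [hθ.1])
        have h3 : (θ / 2) ^ 3 ≤ (6 / 10 ^ 4) ^ 2 * (θ / 2) := by
          rw [show (θ / 2) ^ 3 = (θ / 2) ^ 2 * (θ / 2) by ring]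
          have := hθ.1
          have := hθ.2
          have := h.b2
          exact mul_le_mul_of_nonneg_right
            (pow_le_pow_left₀ (by linarith) (by linarith : θ / 2 ≤ 6 / 10 ^ 4) 2) (by linarith)
        have := h.x1
        nlinarith [sq_nonneg (θ - x + 7 / 10 ^ 6)]
      have := mul_le_mul_of_nonneg_left h1 (h.g.pos θ hθ).le
      linarith)
  rw [intervalIntegral.integral_sub (Continuous.intervalIntegrable (by fun_prop) _ _)
    (Continuous.intervalIntegrable (by fun_prop) _ _), intervalIntegral.integral_const_mul,
    intervalIntegral.integral_const_mul] at this
  have h2 := h.g.m2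
  have h3 := h.Zpos
  linarith

lemma Num.cubic (h : Num P G DP b x K0) :
    ∫ θ in (0:ℝ)..b, P θ * (54 / 10 ^ 5 * ((9 / 200 * (1 / 10 ^ 6 + 6978848 * (θ - x) ^ 2) +
        (2 / 10 ^ 12 + 8 * 1868 ^ 4 * (θ - x) ^ 4) / (9 / 200)) / 12)) ≤
      16 / 10 ^ 10 * ∫ θ in (0:ℝ)..b, P θ := by
  have cP := h.g.cP
  have e : ∀ θ, P θ * (54 / 10 ^ 5 * ((9 / 200 * (1 / 10 ^ 6 + 6978848 * (θ - x) ^ 2) +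
        (2 / 10 ^ 12 + 8 * 1868 ^ 4 * (θ - x) ^ 4) / (9 / 200)) / 12)) =
      (54 / 10 ^ 5 * ((9 / 200 * (1 / 10 ^ 6) + (2 / 10 ^ 12) / (9 / 200)) / 12)) * P θ +
      (54 / 10 ^ 5 * (9 / 200 * 6978848 / 12)) * (P θ * (θ - x) ^ 2) +
      (54 / 10 ^ 5 * (8 * 1868 ^ 4 / (9 / 200) / 12)) * (P θ * (θ - x) ^ 4) := by
    intro θ; ring
  simp only [e]
  rw [intervalIntegral.integral_add (Continuous.intervalIntegrable (by fun_prop) _ _)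
    (Continuous.intervalIntegrable (by fun_prop) _ _),
    intervalIntegral.integral_add (Continuous.intervalIntegrable (by fun_prop) _ _)
    (Continuous.intervalIntegrable (by fun_prop) _ _), intervalIntegral.integral_const_mul,
    intervalIntegral.integral_const_mul, intervalIntegral.integral_const_mul]
  have h2 := h.g.m2
  have h4 := h.g.m4
  have h3 := h.Zpos
  linarith

lemma cos_eq_sin (M θ x : ℝ) : cos (M * θ) = sin ((π / 2 - M * x) - M * (θ - x)) := by
  rw [← cos_pi_div_two_sub]; congr 1; ring

lemma Num.approx (h : Num P G DP b x K0) (M : ℝ) (hM : 0 ≤ M) (hM2 : M ≤ 1868)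
    (he : |π / 2 - M * x| ≤ 7 / 10 ^ 4) :
    |(∫ θ in (0:ℝ)..b, P θ * sin (θ / 2) * cos (M * θ)) -
      ((π / 2 - M * x) * (∫ θ in (0:ℝ)..b, P θ * sin (θ / 2)) -
        M * ∫ θ in (0:ℝ)..b, P θ * sin (θ / 2) * (θ - x))| ≤
      16 / 10 ^ 10 * ∫ θ in (0:ℝ)..b, P θ := by
  have cP := h.g.cP
  have pt : ∀ θ ∈ Ioo 0 b, |P θ * sin (θ / 2) * cos (M * θ) - ((π / 2 - M * x) * (P θ * sin (θ / 2)) -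
        M * (P θ * sin (θ / 2) * (θ - x)))| ≤
        P θ * (54 / 10 ^ 5 * ((9 / 200 * (1 / 10 ^ 6 + 6978848 * (θ - x) ^ 2) +
        (2 / 10 ^ 12 + 8 * 1868 ^ 4 * (θ - x) ^ 4) / (9 / 200)) / 12)) := by
    intro θ hθ
    have hs := h.sin_pos θ hθ
    have hs2 : sin (θ / 2) ≤ 54 / 10 ^ 5 := by
      have := sin_lt (x := θ / 2) (by linarith [hθ.1])
      linarith [hθ.2, h.b2]
    have hc := cubic_bound (π / 2 - M * x) M (θ - x) he hM hM2
    rw [show P θ * sin (θ / 2) * cos (M * θ) - ((π / 2 - M * x) * (P θ * sin (θ / 2)) -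
        M * (P θ * sin (θ / 2) * (θ - x))) = P θ * (sin (θ / 2) *
        (cos (M * θ) - ((π / 2 - M * x) - M * (θ - x)))) by ring, cos_eq_sin M θ x,
        abs_mul, abs_mul, abs_of_pos (h.g.pos θ hθ), abs_of_pos hs]
    have := h.g.pos θ hθ
    gcongr
  have e : (∫ θ in (0:ℝ)..b, P θ * sin (θ / 2) * cos (M * θ)) -
      ((π / 2 - M * x) * (∫ θ in (0:ℝ)..b, P θ * sin (θ / 2)) -
        M * ∫ θ in (0:ℝ)..b, P θ * sin (θ / 2) * (θ - x)) =
      ∫ θ in (0:ℝ)..b, (P θ * sin (θ / 2) * cos (M * θ) - ((π / 2 - M * x) * (P θ * sin (θ / 2)) -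
        M * (P θ * sin (θ / 2) * (θ - x)))) := by
    rw [intervalIntegral.integral_sub (Continuous.intervalIntegrable (by fun_prop) _ _)
      (Continuous.intervalIntegrable (by fun_prop) _ _),
      intervalIntegral.integral_sub (Continuous.intervalIntegrable (by fun_prop) _ _)
      (Continuous.intervalIntegrable (by fun_prop) _ _),
      intervalIntegral.integral_const_mul, intervalIntegral.integral_const_mul]
  rw [e]
  refine (intervalIntegral.abs_integral_le_integral_abs h.g.b_pos.le).trans ?_
  exact (imono h.g.b_pos.le (by fun_prop) (by fun_prop) pt).trans h.cubic

lemma Num.main_i (h : Num P G DP b x K0) :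
    1 / 10 ^ 8 * (∫ θ in (0:ℝ)..b, P θ) ≤ ∫ θ in (0:ℝ)..b, P θ * sin (θ / 2) * cos (1867 * θ) := by
  have hx1 := h.x1
  have hx2 := h.x2
  have p1 := pi_gt_d6
  have p2 := pi_lt_d6
  have ha := (abs_le.1 (h.approx 1867 (by norm_num) (by norm_num)
    (by rw [abs_le]; constructor <;> linarith))).1
  have hT := h.g.T_upper (by linarith [h.b2])
  have hS := h.S_lower
  have hZ := h.Zpos
  set S := ∫ θ in (0:ℝ)..b, P θ * sin (θ / 2)
  set T := ∫ θ in (0:ℝ)..b, P θ * sin (θ / 2) * (θ - x)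
  set Z := ∫ θ in (0:ℝ)..b, P θ
  have hSp : 0 < S := by linarith
  have hT2 : 1867 * T ≤ 1708 / 10 ^ 7 * S := by
    rcases le_total T 0 with h0 | h0
    · nlinarith
    · have : 841237 / 10 ^ 9 * (26 * 10 ^ 9) ≤ x * K0 := by
        have := h.k
        gcongr
      nlinarith
  have he : 2046 / 10 ^ 7 * S ≤ (π / 2 - 1867 * x) * S := by
    gcongr; linarith
  linarith

lemma Num.main_ii (h : Num P G DP b x K0) :
    ∫ θ in (0:ℝ)..b, P θ * sin (θ / 2) * cos (1868 * θ) ≤ - (1 / 10 ^ 7 * (∫ θ in (0:ℝ)..b, P θ)) := by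
  have hx1 := h.x1
  have hx2 := h.x2
  have p1 := pi_gt_d6
  have p2 := pi_lt_d6
  have ha := (abs_le.1 (h.approx 1868 (by norm_num) (by norm_num)
    (by rw [abs_le]; constructor <;> linarith))).2
  have hT := h.g.T_lower (by linarith [h.b2])
  have hS := h.S_lower
  have hZ := h.Zpos
  set S := ∫ θ in (0:ℝ)..b, P θ * sin (θ / 2)
  set T := ∫ θ in (0:ℝ)..b, P θ * sin (θ / 2) * (θ - x)
  set Z := ∫ θ in (0:ℝ)..b, P θ
  have hSp : 0 < S := by linarith
  have hT2 : -(1868 * T) ≤ 3236 / 10 ^ 7 * S := by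
    rcases le_total 0 T with h0 | h0
    · nlinarith
    · have : (106332 / 10 ^ 8 - 841238 / 10 ^ 9) * (26 * 10 ^ 9) ≤ (b - x) * K0 := by
        have := h.k
        have := h.b1
        gcongr
        linarith
      nlinarith
  have he : (π / 2 - 1868 * x) * S ≤ - (6340 / 10 ^ 7) * S := by
    gcongr; linarith
  linarith

end
end Pf

namespace Pf
open Real Set

section
variable {P G DP : ℝ → ℝ} {b x K0 : ℝ}

lemma Num.main_i' (h : Num P G DP b x K0) (M : ℝ) (hM : 0 ≤ M) (hM2 : M ≤ 1867) :
    1 / 10 ^ 8 * (∫ θ in (0:ℝ)..b, P θ) ≤ ∫ θ in (0:ℝ)..b, P θ * sin (θ / 2) * cos (M * θ) := by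
  have cP := h.g.cP
  refine h.main_i.trans (imono h.g.b_pos.le (by fun_prop) (by fun_prop) fun θ hθ => ?_)
  have h0 := hθ.1
  have h1 := h.b2
  have h2 := hθ.2
  refine mul_le_mul_of_nonneg_left ?_ (mul_pos (h.g.pos θ hθ) (h.sin_pos θ hθ)).le
  refine cos_le_cos_of_nonneg_of_le_pi (by positivity) (by linarith [pi_gt_three]) ?_
  exact mul_le_mul_of_nonneg_right hM2 h0.le

lemma exp_m22 : exp (-22) ≤ (1 / 10 ^ 9 : ℝ) := by
  have h := exp_one_gt_d9
  have h1 : exp 22 = exp 1 ^ 22 := by rw [← exp_nat_mul]; norm_num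
  rw [exp_neg, h1, inv_le_comm₀ (by positivity) (by norm_num)]
  have : (2.7 : ℝ) ^ 22 ≤ exp 1 ^ 22 := by gcongr; linarith
  refine le_trans (by norm_num) this

lemma Num.main_ii' (h : Num P G DP b x K0) (M : ℝ) (hM : 1868 ≤ M) (hM2 : M ≤ 5200) :
    ∫ θ in (0:ℝ)..b, P θ * sin (θ / 2) * cos (M * θ) ≤ - (4 / 10 ^ 13 * P x) := by
  have cP := h.g.cP
  have hx := h.g.P0_pos
  have key : ∫ θ in (0:ℝ)..b, P θ * sin (θ / 2) * cos (M * θ) ≤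
      ∫ θ in (0:ℝ)..b, (P θ * sin (θ / 2) * cos (1868 * θ) + 12 / 10 ^ 13 * P x) := by
    refine imono h.g.b_pos.le (by fun_prop) (by fun_prop) fun θ hθ => ?_
    have h0 := hθ.1
    have h1 := h.b2
    have h2 := hθ.2
    have hp := h.g.pos θ hθ
    have hs := h.sin_pos θ hθ
    rcases le_total ((M + 1868) * θ) (2 * π) with hc | hc
    · have hle : cos (M * θ) ≤ cos (1868 * θ) := by
        have e : cos (M * θ) - cos (1868 * θ) =
            -2 * sin ((M + 1868) * θ / 2) * sin ((M - 1868) * θ / 2) := by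
          rw [cos_sub_cos]; congr 2 <;> [congr 1; skip] <;> congr 1 <;> ring
        have s1 : 0 ≤ sin ((M + 1868) * θ / 2) :=
          sin_nonneg_of_nonneg_of_le_pi (by positivity) (by linarith)
        have s2 : 0 ≤ sin ((M - 1868) * θ / 2) :=
          sin_nonneg_of_nonneg_of_le_pi
            (div_nonneg (mul_nonneg (by linarith) h0.le) (by norm_num)) (by linarith)
        nlinarith [mul_nonneg s1 s2]
      have := mul_le_mul_of_nonneg_left hle (mul_pos hp hs).le
      linarith
    · have h3 : 2 * π ≤ 7068 * θ := hc.trans (by gcongr; linarith)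
      have h4 : 477 / 10 ^ 7 ≤ θ - x := by linarith [pi_gt_d6, h.x2]
      have h5 : P θ ≤ P x * (1 / 10 ^ 9) := by
        refine (h.g.upper θ hθ).trans (mul_le_mul_of_nonneg_left ?_ hx.le)
        refine le_trans (exp_le_exp.2 ?_) exp_m22
        nlinarith
      have hs2 : sin (θ / 2) ≤ 54 / 10 ^ 5 := by
        have := sin_lt (x := θ / 2) (by linarith)
        linarith
      have h6 : P θ * sin (θ / 2) ≤ P x * (1 / 10 ^ 9) * (54 / 10 ^ 5) :=
        mul_le_mul h5 hs2 hs.le (by positivity)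
      have hps := (mul_pos hp hs).le
      have h7 : P θ * sin (θ / 2) * cos (M * θ) ≤ P θ * sin (θ / 2) * 1 :=
        mul_le_mul_of_nonneg_left (cos_le_one _) hps
      have h8 : P θ * sin (θ / 2) * (-1) ≤ P θ * sin (θ / 2) * cos (1868 * θ) :=
        mul_le_mul_of_nonneg_left (neg_one_le_cos _) hps
      linarith
  rw [intervalIntegral.integral_add (Continuous.intervalIntegrable (by fun_prop) _ _)
    (Continuous.intervalIntegrable (by fun_prop) _ _), intervalIntegral.integral_const] at key
  simp only [sub_zero, smul_eq_mul] at key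
  have h1 := h.main_ii
  have h2 := h.Zlow
  have h3 : b * (12 / 10 ^ 13 * P x) ≤ 106333 / 10 ^ 8 * (12 / 10 ^ 13 * P x) :=
    mul_le_mul_of_nonneg_right h.b2.le (by positivity)
  linarith

lemma integral_sin_win (m x r : ℝ) (hm : 0 < m) :
    ∫ θ in (x - r)..(x + r), sin (m * θ) = 2 * sin (m * x) * sin (m * r) / m := by
  rw [intervalIntegral.integral_comp_mul_left (fun θ => sin θ) hm.ne', integral_sin,
    mul_sub, mul_add, cos_sub, cos_add, smul_eq_mul]
  field_simp; ring

lemma Num.win (h : Num P G DP b x K0) (m ε : ℝ) (hm : 5200.5 ≤ m) (hε : |ε| = 1) :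
    ε * (∫ θ in (0:ℝ)..b, P θ * sin (m * θ)) ≤ (∫ θ in (0:ℝ)..b, P θ) - 2 / 10 ^ 9 * P x := by
  have cP := h.g.cP
  have hx := h.g.P0_pos
  have hm0 : 0 < m := by linarith
  have h1 := h.g.low_int (by norm_num) (fun θ => 1 - ε * sin (m * θ)) (by fun_prop) (fun θ => by
    have : |ε * sin (m * θ)| ≤ 1 := by rw [abs_mul, hε, one_mul]; exact abs_sin_le_one _
    linarith [le_abs_self (ε * sin (m * θ))])
  have e1 : ∫ θ in (0:ℝ)..b, P θ * (1 - ε * sin (m * θ)) =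
      (∫ θ in (0:ℝ)..b, P θ) - ε * ∫ θ in (0:ℝ)..b, P θ * sin (m * θ) := by
    rw [← intervalIntegral.integral_const_mul, ← intervalIntegral.integral_sub
      (Continuous.intervalIntegrable (by fun_prop) _ _)
      (Continuous.intervalIntegrable (by fun_prop) _ _)]
    congr 1; ext θ; ring
  have e2 : ∫ θ in (x - 102 / 10 ^ 7)..(x + 102 / 10 ^ 7), (1 - ε * sin (m * θ)) =
      2 * (102 / 10 ^ 7) - ε * (2 * sin (m * x) * sin (m * (102 / 10 ^ 7)) / m) := by
    rw [intervalIntegral.integral_sub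
      (Continuous.intervalIntegrable (by fun_prop) _ _)
      (Continuous.intervalIntegrable (by fun_prop) _ _), intervalIntegral.integral_const_mul,
      integral_sin_win _ _ _ hm0, intervalIntegral.integral_const]
    simp only [smul_eq_mul]; ring
  rw [e1, e2] at h1
  have h2 : ε * (2 * sin (m * x) * sin (m * (102 / 10 ^ 7)) / m) ≤
      2 * (102 / 10 ^ 7) * (1 - 46 / 10 ^ 5) := by
    refine (le_abs_self _).trans ?_
    rw [abs_mul, hε, one_mul, abs_div, abs_mul, abs_mul, abs_of_pos hm0, abs_two,
      div_le_iff₀ hm0]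
    have s1 := abs_sin_le_one (m * x)
    have s2 := sin_ratio (m * (102 / 10 ^ 7)) (by linarith)
    have := mul_le_mul s1 s2 (abs_nonneg _) zero_le_one
    linarith
  have h4 : exp (-(3 / 2)) ≤ exp (-(28 * 10 ^ 9 * (102 / 10 ^ 7 : ℝ) ^ 2 / 2)) := by
    refine exp_le_exp.2 (by norm_num)
  have h3 := exp_32.trans h4
  generalize exp (-(28 * 10 ^ 9 * (102 / 10 ^ 7 : ℝ) ^ 2 / 2)) = E at *
  generalize ε * (2 * sin (m * x) * sin (m * (102 / 10 ^ 7)) / m) = W at *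
  have h5 : P x * (223 / 1000) * (2 * (102 / 10 ^ 7) * (46 / 10 ^ 5)) ≤
      P x * E * (2 * (102 / 10 ^ 7) - W) := by
    refine mul_le_mul (mul_le_mul_of_nonneg_left h3 hx.le) (by linarith) (by norm_num) ?_
    exact mul_nonneg hx.le (by linarith)
  linarith

lemma Num.top (h : Num P G DP b x K0) :
    (∫ θ in (0:ℝ)..b, P θ) - 175 / 10 ^ 11 * P x ≤ ∫ θ in (0:ℝ)..b, P θ * sin (1867.5 * θ) := by
  have cP := h.g.cP
  have key := imono h.g.b_pos.le (f := fun θ => (1 - 101 * (22 / 10 ^ 5) ^ 2 / 2) * P θ -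
      1.01 * 1867.5 ^ 2 / 2 * (P θ * (θ - x) ^ 2))
    (g := fun θ => P θ * sin (1867.5 * θ)) (by fun_prop) (by fun_prop) (fun θ hθ => by
      have hp := h.g.pos θ hθ
      have h1 : sin (1867.5 * θ) = cos ((1867.5 * x - π / 2) + 1867.5 * (θ - x)) := by
        rw [← cos_pi_div_two_sub, ← cos_neg]; congr 1; ring
      have h2 := one_sub_sq_div_two_le_cos (x := (1867.5 * x - π / 2) + 1867.5 * (θ - x))
      have he : (1867.5 * x - π / 2) ^ 2 ≤ (22 / 10 ^ 5) ^ 2 := by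
        refine sq_le_sq' ?_ ?_ <;> linarith [pi_gt_d6, pi_lt_d6, h.x1, h.x2]
      have h3 : 1 - 101 * (22 / 10 ^ 5) ^ 2 / 2 - 1.01 * 1867.5 ^ 2 / 2 * (θ - x) ^ 2 ≤
          sin (1867.5 * θ) := by
        rw [h1]; refine le_trans ?_ h2
        generalize 1867.5 * x - π / 2 = e at *
        nlinarith [sq_nonneg (10 * e - 1867.5 * (θ - x) / 10)]
      have := mul_le_mul_of_nonneg_left h3 hp.le
      linarith)
  rw [intervalIntegral.integral_sub (Continuous.intervalIntegrable (by fun_prop) _ _)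
    (Continuous.intervalIntegrable (by fun_prop) _ _), intervalIntegral.integral_const_mul,
    intervalIntegral.integral_const_mul] at key
  have h2 := h.g.m2
  have h3 := h.Zup
  have h4 := h.Zpos
  have hx := h.g.P0_pos
  linarith

/-- Fourier sine integral -/
noncomputable def A (P : ℝ → ℝ) (m : ℝ) : ℝ := ∫ θ in (0:ℝ)..π, P θ * sin (m * θ)

/-- tail bound -/
def Tail (P : ℝ → ℝ) (b x : ℝ) : Prop := ∀ φ : ℝ → ℝ, Continuous φ → (∀ θ, |φ θ| ≤ 1) →
  |(∫ θ in (0:ℝ)..π, P θ * φ θ) - ∫ θ in (0:ℝ)..b, P θ * φ θ| ≤ 1 / 10 ^ 14 * P x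

lemma A_diff (hP : Continuous P) (M : ℝ) : A P (M + 1 / 2) - A P (M - 1 / 2) =
    2 * ∫ θ in (0:ℝ)..π, P θ * (sin (θ / 2) * cos (M * θ)) := by
  unfold A
  rw [← intervalIntegral.integral_const_mul, ← intervalIntegral.integral_sub
      (Continuous.intervalIntegrable (by fun_prop) _ _)
      (Continuous.intervalIntegrable (by fun_prop) _ _)]
  congr 1; ext θ
  rw [← mul_sub, sin_sub_sin]
  rw [show ((M + 1 / 2) * θ - (M - 1 / 2) * θ) / 2 = θ / 2 by ring,
    show ((M + 1 / 2) * θ + (M - 1 / 2) * θ) / 2 = M * θ by ring]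
  ring

lemma abs_sc (M θ : ℝ) : |sin (θ / 2) * cos (M * θ)| ≤ 1 := by
  rw [abs_mul]
  exact mul_le_one₀ (abs_sin_le_one _) (abs_nonneg _) (abs_cos_le_one _)

lemma Num.inc (h : Num P G DP b x K0) (ht : Tail P b x) (M : ℝ) (hM : 0 ≤ M) (hM2 : M ≤ 1867) :
    A P (M - 1 / 2) < A P (M + 1 / 2) := by
  have cP := h.g.cP
  have h1 := A_diff cP M
  have h2 := h.main_i' M hM hM2
  have h3 := (abs_le.1 (ht (fun θ => sin (θ / 2) * cos (M * θ)) (by fun_prop) (abs_sc M))).1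
  simp only [← mul_assoc] at h1 h3
  have := h.Zlow
  have := h.g.P0_pos
  linarith

lemma Num.dec (h : Num P G DP b x K0) (ht : Tail P b x) (M : ℝ) (hM : 1868 ≤ M) (hM2 : M ≤ 5200) :
    A P (M + 1 / 2) < A P (M - 1 / 2) := by
  have cP := h.g.cP
  have h1 := A_diff cP M
  have h2 := h.main_ii' M hM hM2
  have h3 := (abs_le.1 (ht (fun θ => sin (θ / 2) * cos (M * θ)) (by fun_prop) (abs_sc M))).2
  simp only [← mul_assoc] at h1 h3
  have := h.g.P0_pos
  linarith

lemma Num.far (h : Num P G DP b x K0) (ht : Tail P b x) (m : ℝ) (hm : 5200.5 ≤ m) :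
    |A P m| < A P 1867.5 := by
  have cP := h.g.cP
  have h0 := h.top
  have h1 := h.win m 1 hm (by simp)
  have h2 := h.win m (-1) hm (by simp)
  have h3 := abs_le.1 (ht (fun θ => sin (m * θ)) (by fun_prop) (fun θ => abs_sin_le_one _))
  have h4 := abs_le.1 (ht (fun θ => sin (1867.5 * θ)) (by fun_prop) (fun θ => abs_sin_le_one _))
  have := h.g.P0_pos
  unfold A
  rw [abs_lt]
  constructor <;> linarith [h3.1, h3.2, h4.1]

lemma A_neg (m : ℝ) : A P (-m) = - A P m := by
  unfold A
  rw [← intervalIntegral.integral_neg]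
  congr 1; ext θ; rw [neg_mul, sin_neg]; ring

lemma Num.nonneg (h : Num P G DP b x K0) (ht : Tail P b x) (j : ℕ) (hj : j ≤ 1867) :
    0 < A P (j + 1 / 2) := by
  induction j with
  | zero =>
    have := h.inc ht 0 le_rfl (by norm_num)
    rw [zero_sub, A_neg, zero_add] at this
    rw [Nat.cast_zero, zero_add]; linarith
  | succ k ih =>
    have := h.inc ht (k + 1) (by positivity) (by exact_mod_cast hj)
    have := ih (by omega)
    rw [show ((k:ℝ) + 1 - 1 / 2) = k + 1 / 2 by ring] at *
    push_cast; linarith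

lemma Num.incr (h : Num P G DP b x K0) (ht : Tail P b x) (j d : ℕ) (hj : j + (d + 1) ≤ 1867) :
    A P (j + 1 / 2) < A P ((j + (d + 1) : ℕ) + 1 / 2) := by
  induction d with
  | zero =>
    have := h.inc ht (j + 1) (by positivity) (by exact_mod_cast hj)
    rw [show ((j:ℝ) + 1 - 1 / 2) = j + 1 / 2 by ring] at this
    push_cast; simpa using this
  | succ k ih =>
    have h1 := h.inc ht ((j + (k + 1) : ℕ) + 1) (by positivity) (by exact_mod_cast hj)
    have h2 := ih (by omega)
    rw [show (((j + (k + 1) : ℕ):ℝ) + 1 - 1 / 2) = (j + (k + 1) : ℕ) + 1 / 2 by ring] at h1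
    refine h2.trans (h1.trans_le (le_of_eq ?_))
    congr 1; push_cast; ring

lemma Num.decr (h : Num P G DP b x K0) (ht : Tail P b x) (j d : ℕ) (hj0 : 1867 ≤ j)
    (hj : j + (d + 1) ≤ 5200) :
    A P ((j + (d + 1) : ℕ) + 1 / 2) < A P (j + 1 / 2) := by
  induction d with
  | zero =>
    have := h.dec ht (j + 1) (by exact_mod_cast (by omega : 1868 ≤ j + 1)) (by exact_mod_cast hj)
    rw [show ((j:ℝ) + 1 - 1 / 2) = j + 1 / 2 by ring] at this
    push_cast; simpa using this
  | succ k ih =>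
    have h1 := h.dec ht ((j + (k + 1) : ℕ) + 1)
      (by exact_mod_cast (by omega : 1868 ≤ j + (k + 1) + 1)) (by exact_mod_cast hj)
    have h2 := ih (by omega)
    rw [show (((j + (k + 1) : ℕ):ℝ) + 1 - 1 / 2) = (j + (k + 1) : ℕ) + 1 / 2 by ring] at h1
    refine lt_of_le_of_lt (le_of_eq ?_) (h1.trans h2)
    congr 1; push_cast; ring

lemma Num.final (h : Num P G DP b x K0) (ht : Tail P b x) (j : ℕ) (hj : j ≠ 1867) :
    |A P (j + 1 / 2)| < A P 1867.5 := by
  have e : ((1867 : ℕ) : ℝ) + 1 / 2 = 1867.5 := by norm_num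
  rcases lt_trichotomy j 1867 with h1 | h1 | h1
  · rw [abs_of_pos (h.nonneg ht j h1.le), ← e]
    obtain ⟨d, hd⟩ := Nat.exists_eq_add_of_lt h1
    have := h.incr ht j d (by omega)
    rwa [show j + (d + 1) = 1867 by omega] at this
  · exact absurd h1 hj
  · rcases le_or_gt 5200 j with h2 | h2
    · refine h.far ht _ ?_
      have : (5200 : ℝ) ≤ j := by exact_mod_cast h2
      linarith
    · obtain ⟨d, hd⟩ := Nat.exists_eq_add_of_lt h1
      have a1 := h.decr ht 1867 d le_rfl (by omega)
      rw [show 1867 + (d + 1) = j by omega, e] at a1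
      obtain ⟨d', hd'⟩ := Nat.exists_eq_add_of_lt h2
      have a2 := h.decr ht j d' h1.le (by omega)
      rw [show j + (d' + 1) = 5200 by omega] at a2
      have a3 := h.far ht ((5200 : ℕ) + 1 / 2) (by norm_num)
      rw [abs_lt] at a3 ⊢
      exact ⟨by linarith [a3.1], a1⟩

end
end Pf

namespace Pf
open Real Set

lemma exp_50 : π * exp 1080 ≤ 1 / 10 ^ 14 * exp 1130 := by
  have h := exp_one_gt_d9
  have h1 : exp 1130 = exp 1 ^ 50 * exp 1080 := by
    rw [← exp_nat_mul, ← exp_add]; norm_num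
  have h2 : (2.7 : ℝ) ^ 50 ≤ exp 1 ^ 50 := by gcongr; linarith
  rw [h1, ← mul_assoc]
  refine mul_le_mul_of_nonneg_right ?_ (exp_pos _).le
  have h3 : (4 * 10 ^ 14 : ℝ) ≤ 2.7 ^ 50 := by norm_num
  linarith [pi_lt_four]

lemma tail_gen {Q : ℝ → ℝ} (hQ : Continuous Q) {b x : ℝ} (hb : 0 < b) (hb2 : b ≤ π)
    (h1 : ∀ θ, b ≤ θ → θ ≤ π → |Q θ| ≤ exp 1080) (h2 : exp 1130 ≤ Q x) : Tail Q b x := by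
  intro φ hφ hφ1
  have hc : Continuous fun θ => Q θ * φ θ := hQ.mul hφ
  rw [intervalIntegral.integral_interval_sub_left (hc.intervalIntegrable _ _)
    (hc.intervalIntegrable _ _)]
  have h3 := intervalIntegral.norm_integral_le_of_norm_le_const (a := b) (b := π)
    (f := fun θ => Q θ * φ θ) (C := exp 1080) (fun θ hθ => by
      rw [uIoc_of_le hb2] at hθ
      rw [norm_mul, norm_eq_abs, norm_eq_abs]
      calc |Q θ| * |φ θ| ≤ exp 1080 * 1 :=
            mul_le_mul (h1 θ hθ.1.le hθ.2) (hφ1 θ) (abs_nonneg _) (exp_pos _).le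
        _ = _ := mul_one _)
  rw [norm_eq_abs] at h3
  refine h3.trans ?_
  rw [abs_of_nonneg (by linarith)]
  have h4 : exp 1080 * (π - b) ≤ π * exp 1080 := by
    rw [mul_comm]; exact mul_le_mul_of_nonneg_right (by linarith) (exp_pos _).le
  have := exp_50
  linarith

lemma num_exists : ∃ (G DP : ℝ → ℝ) (b x K0 : ℝ), Num (P 5909) G DP b x K0 ∧
    Tail (P 5909) b x := by
  obtain ⟨x, hx, K0, hK, hg⟩ := good_exists
  have p1 := pi_gt_d6
  have p2 := pi_lt_d6
  have b1 : 106332 / 10 ^ 8 < 2 * π / (5909 : ℕ) := by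
    rw [lt_div_iff₀ (by norm_num)]; norm_num; linarith
  have b2 : 2 * π / (5909 : ℕ) < 106333 / 10 ^ 8 := by
    rw [div_lt_iff₀ (by norm_num)]; norm_num; linarith
  refine ⟨_, _, _, x, K0, ⟨hg, hx.1, hx.2, hK, b1, b2⟩, ?_⟩
  refine tail_gen (continuous_P 5909) hg.b_pos (by linarith) (fun θ h1 h2 => ?_) ?_
  · exact tail_P θ (by exact_mod_cast h1) h2
  · refine P0_lower.trans ((hg.upper _ ⟨by positivity, ?_⟩).trans ?_)
    · exact div_lt_div_of_pos_left (by positivity) (by norm_num) (by norm_num)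
    · have hx0 := hg.P0_pos
      generalize P 5909 x = y at *
      have : exp (-(195 * 10 ^ 8 * (2 * π / 7360 - x) ^ 2 / 2)) ≤ 1 :=
        exp_le_one_iff.2 (by have := sq_nonneg (2 * π / 7360 - x); linarith)
      exact mul_le_of_le_one_right hx0.le this

lemma a_eq (i : ℕ) : π * (a 5909 i : ℝ) = A (P 5909) (8730547.5 - i) := by
  rw [coeff_integral 5909 i (by norm_num)]
  unfold A
  have : (((5909 : ℕ) : ℝ) * ((5909 : ℕ) + 1) / 4 - i) = 8730547.5 - i := by norm_num
  rw [this]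

lemma A_lt (i : ℕ) (hi : i ≤ 17461095) (h1 : i ≠ 8728680) (h2 : i ≠ 8732415) :
    |A (P 5909) (8730547.5 - i)| < A (P 5909) 1867.5 := by
  obtain ⟨G, DP, b, x, K0, h, ht⟩ := num_exists
  generalize P 5909 = Q at *
  rcases le_or_gt i 8730547 with hc | hc
  · obtain ⟨j, hj⟩ := Nat.exists_eq_add_of_le hc
    have := h.final ht j (by omega)
    have e : (8730547 : ℝ) = i + j := by exact_mod_cast hj
    rwa [show (8730547.5 - i : ℝ) = j + 1 / 2 by linarith]
  · obtain ⟨j, hj⟩ := Nat.exists_eq_add_of_lt hc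
    have := h.final ht j (by omega)
    have e : (i : ℝ) = 8730547 + j + 1 := by exact_mod_cast hj
    rwa [show (8730547.5 - i : ℝ) = -(j + 1 / 2) by linarith, A_neg, abs_neg]

lemma natAbs_lt (i : ℕ) (hi : i ≤ 17461095) (h1 : i ≠ 8728680) (h2 : i ≠ 8732415) :
    (a 5909 i).natAbs < (a 5909 8728680).natAbs := by
  have h := A_lt i hi h1 h2
  rw [← a_eq, show (1867.5 : ℝ) = 8730547.5 - (8728680 : ℕ) by norm_num, ← a_eq] at h
  rw [abs_mul, abs_of_pos pi_pos] at h
  have h3 := lt_of_mul_lt_mul_left h pi_pos.le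
  have h4 : |a 5909 i| < a 5909 8728680 := by exact_mod_cast h3
  rw [Int.abs_eq_natAbs] at h4
  omega

lemma natAbs_sym : (a 5909 8732415).natAbs = (a 5909 8728680).natAbs := by
  have h1 := a_eq 8732415
  have h2 := a_eq 8728680
  rw [show (8730547.5 - (8732415 : ℕ) : ℝ) = -(8730547.5 - (8728680 : ℕ)) by norm_num, A_neg,
    ← h2, ← mul_neg] at h1
  have h3 := mul_left_cancel₀ pi_ne_zero h1
  have h4 : a 5909 8732415 = - a 5909 8728680 := by exact_mod_cast h3
  rw [h4, Int.natAbs_neg]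

lemma M_eq : M 5909 = (a 5909 8728680).natAbs := by
  unfold M
  apply le_antisymm
  · refine Finset.sup_le fun i hi => ?_
    have hi' : i ≤ 17461095 := by
      have := Finset.mem_range.1 hi
      norm_num at this
      omega
    by_cases h1 : i = 8728680
    · rw [h1]
    by_cases h2 : i = 8732415
    · rw [h2, natAbs_sym]
    exact (natAbs_lt i hi' h1 h2).le
  · exact Finset.le_sup (f := fun i => (a 5909 i).natAbs) (Finset.mem_range.2 (by norm_num))

lemma L_eq : L 5909 = 8728680 := by
  unfold L
  apply le_antisymm
  · exact Nat.sInf_le (show (a 5909 8728680).natAbs = M 5909 from M_eq.symm)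
  · refine le_csInf ⟨8728680, M_eq.symm⟩ fun i hi => ?_
    by_contra hc
    push Not at hc
    have h1 : (a 5909 i).natAbs = M 5909 := hi
    rw [M_eq] at h1
    have := natAbs_lt i (by omega) (by omega) (by omega)
    omega

end Pf

/-- `L(5909) = (5909·5910 - 2·3735)/4 = 8728680`. -/
theorem stmt_16 : L 5909 = (5909 * 5910 - 2 * 3735) / 4 ∧ L 5909 = 8728680 := by
  refine ⟨?_, Pf.L_eq⟩
  rw [Pf.L_eq]
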